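/- Let p ≥ 2 be an integer and α ∈ (0, 1/(p−1)). Let γ : (0,∞) → ℝ be a function of bounded variation, let (c_k)_{k≥1} be complex numbers with Σ_{k=1}^∞ |c_k|^α < ∞ and (φ_k)_{k≥1} real numbers, and set W(x) = Σ_{k=1}^∞ c_k e^{−iφ_k x}. Suppose V(x) = γ(x) W(x) is real-valued and ∫_0^∞ |V(x)|^p dx < ∞. Then the set S = {E > 0 : some solution of −u'' + V u = E u on (0,∞) is unbounded} has Hausdorff dimension at most (p−1)α. -/

import Mathlib

open scoped BigOperators ENNReal
open MeasureTheory

/-- `u` (with derivative `u'`) is a solution of `-u'' + V u = E u` on `(0,∞)`: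
`u` is differentiable with derivative `u'`, and `u'` is locally absolutely continuous
with `-u'' + V u = E u` almost everywhere, encoded in integral (FTC) form. -/
def IsWeakSolution (V : ℝ → ℝ) (E : ℝ) (u u' : ℝ → ℂ) : Prop :=
  (∀ x ∈ Set.Ioi (0:ℝ), HasDerivAt u (u' x) x) ∧
  ∀ a b : ℝ, 0 < a → a ≤ b →
    IntervalIntegrable (fun x => (V x : ℂ) * u x - (E : ℂ) * u x) volume a b ∧
    u' b - u' a = ∫ x in a..b, ((V x : ℂ) * u x - (E : ℂ) * u x)

section

open Filter Topology Set

/-- The closed neighbourhood mass of the weighted point set `(a i, m i)` around the `j`-th dyadic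
cell of length `2⁻ⁿ`. -/
noncomputable def dyadicMass {ι : Type*} (m : ι → ℝ≥0∞) (a : ι → ℝ) (n : ℕ) (j : ℤ) : ℝ≥0∞ :=
  ∑' i, if |⌊2 ^ n * a i⌋ - j| ≤ 1 then m i else 0

theorem tsum_dyadicMass_le {ι : Type*} (m : ι → ℝ≥0∞) (a : ι → ℝ) (n : ℕ) :
    ∑' j, dyadicMass m a n j ≤ 3 * ∑' i, m i := by
  unfold dyadicMass
  rw [ENNReal.tsum_comm, ← ENNReal.tsum_mul_left]
  refine ENNReal.tsum_le_tsum fun i => ?_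
  set c := ⌊2 ^ n * a i⌋
  rw [tsum_eq_sum (s := Finset.Icc (c - 1) (c + 1))]
  · refine (Finset.sum_le_sum (g := fun _ => m i) fun j _ => ?_).trans ?_
    · split_ifs <;> simp
    · rw [Finset.sum_const, Int.card_Icc, nsmul_eq_mul,
        show (c + 1 + 1 - (c - 1)).toNat = 3 by ring_nf; rfl]
      norm_num
  · intro j hj
    rw [if_neg]
    intro h
    rw [abs_le] at h
    exact hj (Finset.mem_Icc.2 ⟨by linarith, by linarith⟩)

theorem abs_floor_sub_floor_le_one {x y : ℝ} {n : ℕ} (h : |x - y| < (1 / 2) ^ n) :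
    |⌊2 ^ n * x⌋ - ⌊2 ^ n * y⌋| ≤ 1 := by
  have h2 : (2 : ℝ) ^ n * (1 / 2) ^ n = 1 := by rw [← mul_pow]; norm_num
  have h3 : |2 ^ n * x - 2 ^ n * y| < 1 := by
    rw [← mul_sub, abs_mul, abs_of_pos (by positivity : (0 : ℝ) < 2 ^ n), ← h2]
    exact mul_lt_mul_of_pos_left h (by positivity)
  rw [abs_lt] at h3
  have a1 := Int.floor_le ((2 : ℝ) ^ n * x)
  have a2 := Int.lt_floor_add_one ((2 : ℝ) ^ n * x)
  have a3 := Int.floor_le ((2 : ℝ) ^ n * y)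
  have a4 := Int.lt_floor_add_one ((2 : ℝ) ^ n * y)
  rw [abs_le]
  constructor
  · have : ((⌊(2 : ℝ) ^ n * y⌋ : ℤ) : ℝ) < ⌊(2 : ℝ) ^ n * x⌋ + 2 := by linarith
    have : ⌊(2 : ℝ) ^ n * y⌋ < ⌊(2 : ℝ) ^ n * x⌋ + 2 := by exact_mod_cast this
    linarith
  · have : ((⌊(2 : ℝ) ^ n * x⌋ : ℤ) : ℝ) < ⌊(2 : ℝ) ^ n * y⌋ + 2 := by linarith
    have : ⌊(2 : ℝ) ^ n * x⌋ < ⌊(2 : ℝ) ^ n * y⌋ + 2 := by exact_mod_cast this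
    linarith

theorem ediam_floor_fiber_le (n : ℕ) (j : ℤ) :
    Metric.ediam {x : ℝ | ⌊2 ^ n * x⌋ = j} ≤ ENNReal.ofReal ((1 / 2) ^ n) := by
  refine Metric.ediam_le fun x hx y hy => ?_
  rw [edist_dist, Real.dist_eq]
  refine ENNReal.ofReal_le_ofReal ?_
  have a1 := Int.floor_le ((2 : ℝ) ^ n * x)
  have a2 := Int.lt_floor_add_one ((2 : ℝ) ^ n * x)
  have a3 := Int.floor_le ((2 : ℝ) ^ n * y)
  have a4 := Int.lt_floor_add_one ((2 : ℝ) ^ n * y)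
  rw [mem_ofPred_eq] at hx hy
  rw [hx] at a1 a2
  rw [hy] at a3 a4
  have h2 : (2 : ℝ) ^ n * (1 / 2) ^ n = 1 := by rw [← mul_pow]; norm_num
  have h3 : |2 ^ n * x - 2 ^ n * y| ≤ 1 := abs_le.2 ⟨by linarith, by linarith⟩
  rw [← mul_sub, abs_mul, abs_of_pos (by positivity : (0 : ℝ) < 2 ^ n), ← h2] at h3
  exact le_of_mul_le_mul_left h3 (by positivity)

/-- Points at which the local mass of a finite weighted point set exceeds `r ^ s` at infinitely many
dyadic scales `r` form a set of dimension at most `t`, for every `t > s`. -/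
theorem dimH_frequently_dyadicMass_le {ι : Type*} (m : ι → ℝ≥0∞) (a : ι → ℝ)
    (hm : ∑' i, m i ≠ ⊤) {s t : ℝ} (hs : 0 < s) (hst : s < t) :
    dimH {x : ℝ | ∃ᶠ n : ℕ in atTop,
      ENNReal.ofReal (((1 / 2 : ℝ) ^ n) ^ s) < dyadicMass m a n ⌊2 ^ n * x⌋}
      ≤ ENNReal.ofReal t := by
  have ht : 0 < t := hs.trans hst
  set A := {x : ℝ | ∃ᶠ n : ℕ in atTop,
      ENNReal.ofReal (((1 / 2 : ℝ) ^ n) ^ s) < dyadicMass m a n ⌊2 ^ n * x⌋} with hA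
  classical
  let U : ℕ → ℕ × ℤ → Set ℝ := fun N p =>
    if ENNReal.ofReal (((1 / 2 : ℝ) ^ (N + p.1)) ^ s) < dyadicMass m a (N + p.1) p.2 then
      {x : ℝ | ⌊2 ^ (N + p.1) * x⌋ = p.2} else ∅
  set ρ : ℝ := (1 / 2 : ℝ) ^ (t - s) with hρ
  have hρ0 : 0 < ρ := by positivity
  have hρ1 : ρ < 1 := Real.rpow_lt_one (by norm_num) (by norm_num) (by linarith)
  have hU : ∀ N p, Metric.ediam (U N p) ≤ ENNReal.ofReal ((1 / 2) ^ N) := by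
    intro N p
    simp only [U]
    split_ifs
    · refine (ediam_floor_fiber_le _ _).trans (ENNReal.ofReal_le_ofReal ?_)
      exact pow_le_pow_of_le_one (by norm_num) (by norm_num) (by omega)
    · simp
  have hUt : ∀ N p, Metric.ediam (U N p) ^ t ≤
      ENNReal.ofReal (ρ ^ (N + p.1)) * dyadicMass m a (N + p.1) p.2 := by
    intro N p
    simp only [U]
    split_ifs with h
    · calc _ ≤ ENNReal.ofReal ((1 / 2) ^ (N + p.1)) ^ t :=
            ENNReal.rpow_le_rpow (ediam_floor_fiber_le _ _) ht.le
        _ = ENNReal.ofReal (((1 / 2 : ℝ) ^ (N + p.1)) ^ t) :=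
            ENNReal.ofReal_rpow_of_pos (by positivity)
        _ = ENNReal.ofReal (ρ ^ (N + p.1)) *
              ENNReal.ofReal (((1 / 2 : ℝ) ^ (N + p.1)) ^ s) := by
            rw [← ENNReal.ofReal_mul (by positivity)]
            congr 1
            rw [hρ, ← Real.rpow_natCast, ← Real.rpow_natCast, ← Real.rpow_mul (by norm_num),
              ← Real.rpow_mul (by norm_num), ← Real.rpow_mul (by norm_num),
              ← Real.rpow_add (by norm_num)]
            congr 1; ring
        _ ≤ _ := by gcongr
    · simp [ht]
  have hsum : ∀ N, ∑' p, Metric.ediam (U N p) ^ t ≤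
      (∑' k : ℕ, ENNReal.ofReal (ρ ^ k)) * (3 * ∑' i, m i) := by
    intro N
    calc _ ≤ ∑' p : ℕ × ℤ, ENNReal.ofReal (ρ ^ (N + p.1)) * dyadicMass m a (N + p.1) p.2 :=
          ENNReal.tsum_le_tsum (hUt N)
      _ = ∑' (k : ℕ) (j : ℤ), ENNReal.ofReal (ρ ^ (N + k)) * dyadicMass m a (N + k) j :=
          ENNReal.tsum_prod (f := fun k j => ENNReal.ofReal (ρ ^ (N + k)) * dyadicMass m a (N + k) j)
      _ ≤ ∑' (k : ℕ), ENNReal.ofReal (ρ ^ k) * (3 * ∑' i, m i) := by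
          refine ENNReal.tsum_le_tsum fun k => ?_
          rw [ENNReal.tsum_mul_left]
          refine mul_le_mul' (ENNReal.ofReal_le_ofReal ?_) (tsum_dyadicMass_le _ _ _)
          exact pow_le_pow_of_le_one hρ0.le hρ1.le (by omega)
      _ = _ := ENNReal.tsum_mul_right
  have hfin : (∑' k : ℕ, ENNReal.ofReal (ρ ^ k)) * (3 * ∑' i, m i) ≠ ⊤ := by
    refine ENNReal.mul_ne_top ?_ (ENNReal.mul_ne_top (by norm_num) hm)
    exact (summable_geometric_of_lt_one hρ0.le hρ1).tsum_ofReal_ne_top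
  have hμ : μH[t] A ≤ (∑' k : ℕ, ENNReal.ofReal (ρ ^ k)) * (3 * ∑' i, m i) := by
    refine (Measure.hausdorffMeasure_le_liminf_tsum t A (l := atTop)
      (fun N : ℕ => ENNReal.ofReal ((1 / 2) ^ N)) ?_ U ?_ ?_).trans ?_
    · rw [← ENNReal.ofReal_zero]
      exact ENNReal.tendsto_ofReal
        (tendsto_pow_atTop_nhds_zero_of_lt_one (by norm_num) (by norm_num))
    · exact Eventually.of_forall hU
    · refine Eventually.of_forall fun N x hx => ?_
      obtain ⟨n, hn, hx⟩ := (frequently_atTop.1 hx) N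
      obtain ⟨k, rfl⟩ := Nat.exists_eq_add_of_le hn
      refine mem_iUnion.2 ⟨(k, ⌊2 ^ (N + k) * x⌋), ?_⟩
      simp only [U]
      rw [if_pos hx]
      rfl
    · refine (liminf_le_liminf (Eventually.of_forall hsum)).trans ?_
      simp
  have := dimH_le_of_hausdorffMeasure_ne_top (s := A) (d := t.toNNReal)
    (by rw [Real.coe_toNNReal _ ht.le]; exact (hμ.trans_lt hfin.lt_top).ne)
  exact this

/-- If the local `β`-mass at `x` is eventually at most `r ^ s` with `s > β`, the potential
`∑ w i / |x - a i|` converges. -/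
theorem tsum_div_dist_ne_top_of_eventually {ι : Type*} (w a : ι → ℝ) (hw : ∀ i, 0 < w i)
    {β s : ℝ} (hβ0 : 0 < β) (hβ1 : β < 1) (hs : Summable fun i => w i ^ β) (hβs : β < s) {x : ℝ}
    (hx : ∀ᶠ n : ℕ in atTop, dyadicMass (fun i => ENNReal.ofReal (w i ^ β)) a n ⌊2 ^ n * x⌋ ≤
      ENNReal.ofReal (((1 / 2 : ℝ) ^ n) ^ s)) :
    ∑' i, ENNReal.ofReal (w i) / ENNReal.ofReal |x - a i| ≠ ⊤ := by
  classical
  obtain ⟨N, hN⟩ := eventually_atTop.1 hx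
  have hs0 : 0 < s := hβ0.trans hβs
  let m : ι → ℝ≥0∞ := fun i => ENNReal.ofReal (w i ^ β)
  let near : ℕ → ι → Prop := fun n i => |⌊2 ^ n * a i⌋ - ⌊2 ^ n * x⌋| ≤ 1
  have hmle : ∀ n, N ≤ n → ∀ i, near n i → w i ^ β ≤ ((1 / 2 : ℝ) ^ n) ^ s := by
    intro n hn i hi
    have := (ENNReal.le_tsum (f := fun i => if |⌊2 ^ n * a i⌋ - ⌊2 ^ n * x⌋| ≤ 1 then m i else 0)
      i).trans (hN n hn)
    rw [if_pos hi] at this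
    exact (ENNReal.ofReal_le_ofReal_iff (by positivity)).1 this
  have hwle : ∀ n, N ≤ n → ∀ i, near n i →
      w i ≤ w i ^ β * (((1 / 2 : ℝ) ^ n) ^ s) ^ ((1 - β) / β) := by
    intro n hn i hi
    calc w i = w i ^ β * (w i ^ β) ^ ((1 - β) / β) := by
          rw [← Real.rpow_mul (hw i).le, ← Real.rpow_add (hw i)]
          rw [show β + β * ((1 - β) / β) = 1 by field_simp; ring, Real.rpow_one]
      _ ≤ _ := by
          have hwβ : 0 ≤ w i ^ β := Real.rpow_nonneg (hw i).le _
          exact mul_le_mul_of_nonneg_left (Real.rpow_le_rpow hwβ (hmle n hn i hi)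
            (div_nonneg (by linarith) hβ0.le)) hwβ
  set σ : ℝ := 2 * ((1 / 2 : ℝ) ^ (s / β)) with hσ
  have hσ0 : 0 < σ := by positivity
  have hσ1 : σ < 1 := by
    have : (1 / 2 : ℝ) ^ (s / β) < (1 / 2 : ℝ) ^ (1 : ℝ) :=
      Real.rpow_lt_rpow_of_exponent_gt (by norm_num) (by norm_num) ((one_lt_div hβ0).2 hβs)
    rw [Real.rpow_one] at this
    linarith
  have hne : ∀ i, x ≠ a i := by
    rintro i rfl
    have h0 : Tendsto (fun n : ℕ => ((1 / 2 : ℝ) ^ n) ^ s) atTop (𝓝 0) := by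
      have : Tendsto (fun n : ℕ => ((1 / 2 : ℝ) ^ s) ^ n) atTop (𝓝 0) :=
        tendsto_pow_atTop_nhds_zero_of_lt_one (by positivity)
          (Real.rpow_lt_one (by norm_num) (by norm_num) hs0)
      refine this.congr fun n => ?_
      rw [← Real.rpow_natCast, ← Real.rpow_natCast, ← Real.rpow_mul (by norm_num),
        ← Real.rpow_mul (by norm_num), mul_comm]
    have : w i ^ β ≤ 0 := ge_of_tendsto h0 (eventually_atTop.2
      ⟨N, fun n hn => hmle n hn i (by simp [near])⟩)
    have := Real.rpow_pos_of_pos (hw i) β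
    linarith
  have key : ∀ i, ENNReal.ofReal (w i) / ENNReal.ofReal |x - a i| ≤
      ENNReal.ofReal (2 ^ N) * ENNReal.ofReal (w i) + ∑' n : ℕ,
        (if near (N + n) i then ENNReal.ofReal (2 ^ (N + n + 1) * w i) else 0) := by
    intro i
    have hd : 0 < |x - a i| := abs_pos.2 (sub_ne_zero.2 (hne i))
    have hrec : ∀ n : ℕ, (1 / 2 : ℝ) ^ n ≤ |x - a i| →
        ENNReal.ofReal (w i) / ENNReal.ofReal |x - a i| ≤ ENNReal.ofReal (2 ^ n * w i) := by
      intro n hn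
      rw [← ENNReal.ofReal_div_of_pos hd]
      refine ENNReal.ofReal_le_ofReal ?_
      rw [div_le_iff₀ hd]
      have h2 : (2 : ℝ) ^ n * (1 / 2) ^ n = 1 := by rw [← mul_pow]; norm_num
      calc w i = w i * (2 ^ n * (1 / 2) ^ n) := by rw [h2, mul_one]
        _ ≤ w i * (2 ^ n * |x - a i|) := by gcongr; exact (hw i).le
        _ = _ := by ring
    by_cases hfar : (1 / 2 : ℝ) ^ N ≤ |x - a i|
    · refine le_add_right ((hrec N hfar).trans_eq (ENNReal.ofReal_mul (by positivity)))
    · push Not at hfar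
      have hex : ∃ n : ℕ, (1 / 2 : ℝ) ^ n ≤ |x - a i| := by
        obtain ⟨n, hn⟩ := exists_pow_lt_of_lt_one hd (by norm_num : (1 / 2 : ℝ) < 1)
        exact ⟨n, hn.le⟩
      set n := Nat.find hex with hn
      have h1 : (1 / 2 : ℝ) ^ n ≤ |x - a i| := Nat.find_spec hex
      have hNn : N < n := by
        by_contra! h
        have := pow_le_pow_of_le_one (by norm_num : (0 : ℝ) ≤ 1 / 2) (by norm_num) h
        linarith
      obtain ⟨k, hk⟩ := Nat.exists_eq_add_of_lt hNn
      have h2 : |x - a i| < (1 / 2 : ℝ) ^ (N + k) := by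
        have := Nat.find_min hex (m := N + k) (by omega)
        exact not_le.1 this
      refine le_add_left ((?_ : _ ≤ _).trans (ENNReal.le_tsum k))
      rw [if_pos]
      · rw [← hk]; exact hrec n h1
      · exact abs_floor_sub_floor_le_one (by rwa [abs_sub_comm])
  have hsumw : ∑' i, ENNReal.ofReal (w i) ≠ ⊤ := by
    refine Summable.tsum_ofReal_ne_top ?_
    have h0 := hs.tendsto_cofinite_zero.eventually (gt_mem_nhds (zero_lt_one' ℝ))
    refine Summable.of_norm_bounded_eventually hs ?_
    filter_upwards [h0] with i hi
    rw [Real.norm_of_nonneg (hw i).le]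
    have hwi : w i ≤ 1 := by
      by_contra! h
      exact absurd hi (not_lt.2 (Real.one_le_rpow h.le hβ0.le))
    calc w i = w i ^ (1 : ℝ) := (Real.rpow_one _).symm
      _ ≤ w i ^ β := Real.rpow_le_rpow_of_exponent_ge (hw i) hwi hβ1.le
  have hbound : ∀ n, N ≤ n → ∑' i, (if near n i then ENNReal.ofReal (2 ^ (n + 1) * w i) else 0) ≤
      ENNReal.ofReal (2 * σ ^ n) := by
    intro n hn
    set B := 2 ^ (n + 1) * (((1 / 2 : ℝ) ^ n) ^ s) ^ ((1 - β) / β) with hB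
    have hB0 : 0 ≤ B := by positivity
    calc _ ≤ ∑' i, ENNReal.ofReal B * (if near n i then m i else 0) := by
          refine ENNReal.tsum_le_tsum fun i => ?_
          split_ifs with h
          · rw [← ENNReal.ofReal_mul hB0]
            refine ENNReal.ofReal_le_ofReal ?_
            calc _ ≤ 2 ^ (n + 1) * (w i ^ β * (((1 / 2 : ℝ) ^ n) ^ s) ^ ((1 - β) / β)) := by
                  gcongr; exact hwle n hn i h
              _ = _ := by rw [hB]; ring
          · simp
      _ = ENNReal.ofReal B * dyadicMass m a n ⌊2 ^ n * x⌋ := ENNReal.tsum_mul_left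
      _ ≤ ENNReal.ofReal B * ENNReal.ofReal (((1 / 2 : ℝ) ^ n) ^ s) := by gcongr; exact hN n hn
      _ = _ := by
          rw [← ENNReal.ofReal_mul hB0]
          congr 1
          have hX : 0 < ((1 / 2 : ℝ) ^ n) ^ s := by positivity
          have e1 : (((1 / 2 : ℝ) ^ n) ^ s) ^ ((1 - β) / β) * ((1 / 2 : ℝ) ^ n) ^ s
              = ((1 / 2 : ℝ) ^ (s / β)) ^ n := by
            nth_rewrite 2 [← Real.rpow_one (((1 / 2 : ℝ) ^ n) ^ s)]
            rw [← Real.rpow_add hX, ← Real.rpow_natCast, ← Real.rpow_natCast,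
              ← Real.rpow_mul (by norm_num), ← Real.rpow_mul (by norm_num),
              ← Real.rpow_mul (by norm_num)]
            congr 1
            field_simp
            ring
          rw [hB, mul_assoc, e1, hσ, mul_pow]
          ring
  refine ne_top_of_le_ne_top ?_ (ENNReal.tsum_le_tsum key)
  rw [ENNReal.tsum_add, ENNReal.tsum_mul_left, ENNReal.tsum_comm]
  refine ENNReal.add_ne_top.2 ⟨ENNReal.mul_ne_top ENNReal.ofReal_ne_top hsumw, ?_⟩
  refine ne_top_of_le_ne_top ?_ (ENNReal.tsum_le_tsum fun n => hbound (N + n) (by omega))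
  refine Summable.tsum_ofReal_ne_top ?_
  have := ((summable_geometric_of_lt_one hσ0.le hσ1).mul_left (2 * σ ^ N))
  refine this.congr fun n => ?_
  rw [pow_add]; ring

theorem dimH_tsum_div_dist_eq_top_le {ι : Type*} (w a : ι → ℝ) (hw : ∀ i, 0 < w i)
    {β : ℝ} (hβ0 : 0 < β) (hβ1 : β < 1) (hs : Summable fun i => w i ^ β) :
    dimH {x : ℝ | ∑' i, ENNReal.ofReal (w i) / ENNReal.ofReal |x - a i| = ⊤} ≤
      ENNReal.ofReal β := by
  have h : ∀ t, β < t → dimH {x : ℝ | ∑' i, ENNReal.ofReal (w i) / ENNReal.ofReal |x - a i| = ⊤} ≤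
      ENNReal.ofReal t := by
    intro t ht
    obtain ⟨s, hβs, hst⟩ := exists_between ht
    refine (dimH_mono fun x hx => ?_).trans (dimH_frequently_dyadicMass_le
      (fun i => ENNReal.ofReal (w i ^ β)) a hs.tsum_ofReal_ne_top (hβ0.trans hβs) hst)
    by_contra hcon
    refine tsum_div_dist_ne_top_of_eventually w a hw hβ0 hβ1 hs hβs ?_ hx
    simpa [not_frequently] using hcon
  refine ge_of_tendsto (x := 𝓝[>] β) (f := fun t => ENNReal.ofReal t) ?_
    (eventually_mem_nhdsWithin.mono fun t ht => h t ht)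
  exact (ENNReal.continuous_ofReal.tendsto β).mono_left nhdsWithin_le_nhds

theorem norm_exp_neg_I_mul (a x : ℝ) : ‖Complex.exp (-Complex.I * a * x)‖ = 1 := by
  rw [show -Complex.I * (a:ℂ) * x = ((-(a * x) : ℝ) : ℂ) * Complex.I by push_cast; ring]
  exact Complex.norm_exp_ofReal_mul_I _

section AlmostPeriodic

variable {κ : Type*} {c : κ → ℂ}

/-- The almost periodic function with Fourier coefficients `c k` at frequencies `φ k`. -/
noncomputable def expSeries (c : κ → ℂ) (φ : κ → ℝ) (x : ℝ) : ℂ :=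
  ∑' k, c k * Complex.exp (-Complex.I * φ k * x)

theorem norm_mul_exp_neg_I_mul (z : ℂ) (a x : ℝ) :
    ‖z * Complex.exp (-Complex.I * a * x)‖ = ‖z‖ := by
  rw [norm_mul, norm_exp_neg_I_mul, mul_one]

theorem norm_expSeries_le (hc : Summable fun k => ‖c k‖) (φ : κ → ℝ) (x : ℝ) :
    ‖expSeries c φ x‖ ≤ ∑' k, ‖c k‖ :=
  tsum_of_norm_bounded hc.hasSum fun _ => (norm_mul_exp_neg_I_mul _ _ _).le

theorem continuous_expSeries (hc : Summable fun k => ‖c k‖) (φ : κ → ℝ) :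
    Continuous (expSeries c φ) :=
  continuous_tsum (fun _ => by fun_prop) hc fun _ _ => (norm_mul_exp_neg_I_mul _ _ _).le

theorem expSeries_add (c : κ → ℂ) (φ : κ → ℝ) (x y : ℝ) :
    expSeries c φ (x + y) =
      expSeries (fun k => c k * Complex.exp (-Complex.I * φ k * y)) φ x := by
  unfold expSeries
  congr 1
  ext k
  beta_reduce
  rw [mul_assoc (c k), ← Complex.exp_add]
  congr 2
  push_cast
  ring

theorem tendsto_expSeries (hc : Summable fun k => ‖c k‖) (φ : κ → ℝ) {w : ℕ → κ → ℂ}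
    {z : κ → ℂ} (hw : ∀ n k, ‖w n k‖ ≤ ‖c k‖) (hz : ∀ k, Tendsto (fun n => w n k) atTop (𝓝 (z k)))
    (x : ℝ) : Tendsto (fun n => expSeries (w n) φ x) atTop (𝓝 (expSeries z φ x)) :=
  tendsto_tsum_of_dominated_convergence hc (fun k => (hz k).mul_const _)
    (Eventually.of_forall fun n k => (norm_mul_exp_neg_I_mul _ _ _).trans_le (hw n k))

theorem exists_le_integral_norm_expSeries_pow [Countable κ] (hc : Summable fun k => ‖c k‖)
    (φ : κ → ℝ) {x₀ : ℝ} (hx₀ : expSeries c φ x₀ ≠ 0) (p : ℕ) :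
    ∃ N : ℝ, 0 ≤ N ∧ ∃ δ > 0, ∀ x, δ ≤ ∫ y in x..x + N, ‖expSeries c φ y‖ ^ p := by
  by_contra! hcon
  have h1 : ∀ n : ℕ, ∃ x, ∫ y in x..x + 2 * n, ‖expSeries c φ y‖ ^ p < 1 / ((n:ℝ) + 1) :=
    fun n => hcon (2 * n) (by positivity) _ (by positivity)
  choose x hx using h1
  have hcont := continuous_expSeries hc φ
  set e : ℕ → κ → ℂ := fun n k => Complex.exp (-Complex.I * φ k * (x n + n : ℝ)) with he
  have hen : ∀ n k, ‖e n k‖ = 1 := fun n k => norm_exp_neg_I_mul _ _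
  obtain ⟨z, -, s, hs, hsz⟩ := (isCompact_univ_pi (s := fun _ : κ => Metric.closedBall (0:ℂ) 1)
    fun k => isCompact_closedBall 0 1).tendsto_subseq (x := e) fun n k _ => by
      rw [mem_closedBall_zero_iff, hen]
  have hsz' : ∀ k, Tendsto (fun n => e (s n) k) atTop (𝓝 (z k)) := fun k =>
    (tendsto_pi_nhds.1 hsz) k
  have hz1 : ∀ k, ‖z k‖ = 1 := fun k =>
    tendsto_nhds_unique (hsz' k).norm (by simp only [hen]; exact tendsto_const_nhds)
  set d : κ → ℂ := fun k => c k * z k with hd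
  have hdc : Summable fun k => ‖d k‖ := by simpa [hd, hz1] using hc
  have hlim : ∀ y, Tendsto (fun n => expSeries c φ (y + (x (s n) + s n))) atTop
      (𝓝 (expSeries d φ y)) := fun y => by
    simp only [expSeries_add c φ y]
    exact tendsto_expSeries hc φ (fun n k => (norm_mul_exp_neg_I_mul _ _ _).le)
      (fun k => (hsz' k).const_mul _) y
  have hzero : ∀ y, expSeries d φ y = 0 := by
    intro y
    by_contra hy
    obtain ⟨R, hR⟩ := exists_nat_gt |y|
    have hR' := abs_lt.1 hR
    have hpos : 0 < ∫ t in (-R:ℝ)..R, ‖expSeries d φ t‖ ^ p :=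
      intervalIntegral.integral_pos (by linarith)
        ((continuous_expSeries hdc φ).norm.pow p).continuousOn (fun _ _ => by positivity)
        ⟨y, ⟨hR'.1.le, hR'.2.le⟩, by positivity⟩
    have hinteg : Tendsto (fun n => ∫ t in (-R:ℝ)..R, ‖expSeries c φ (t + (x (s n) + s n))‖ ^ p)
        atTop (𝓝 (∫ t in (-R:ℝ)..R, ‖expSeries d φ t‖ ^ p)) := by
      refine intervalIntegral.tendsto_integral_filter_of_dominated_convergence
        (fun _ => (∑' k, ‖c k‖) ^ p) (Eventually.of_forall fun n => ?_)
        (Eventually.of_forall fun n => Eventually.of_forall fun t _ => ?_)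
        intervalIntegrable_const (Eventually.of_forall fun t _ => (hlim t).norm.pow p)
      · exact ((hcont.comp (continuous_id.add continuous_const)).norm.pow p).aestronglyMeasurable
      · rw [norm_pow, norm_norm]
        exact pow_le_pow_left₀ (norm_nonneg _) (norm_expSeries_le hc φ _) p
    have hle : ∀ᶠ n in atTop, (∫ t in (-R:ℝ)..R, ‖expSeries c φ (t + (x (s n) + s n))‖ ^ p) ≤
        1 / ((s n : ℝ) + 1) := by
      filter_upwards [hs.tendsto_atTop.eventually_ge_atTop R] with n hn
      have hn' : (R:ℝ) ≤ s n := by exact_mod_cast hn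
      refine le_trans ?_ (hx (s n)).le
      rw [intervalIntegral.integral_comp_add_right (fun t => ‖expSeries c φ t‖ ^ p)]
      refine intervalIntegral.integral_mono_interval (by linarith) (by linarith) (by linarith)
        (Eventually.of_forall fun t => by simp only [Pi.zero_apply]; positivity)
        ((hcont.norm.pow p).intervalIntegrable _ _)
    have h0 := le_of_tendsto_of_tendsto hinteg
      (tendsto_one_div_add_atTop_nhds_zero_nat.comp hs.tendsto_atTop) hle
    exact absurd h0 (not_le.2 hpos)
  have hlim2 : Tendsto (fun n => expSeries d φ (x₀ + -(x (s n) + s n))) atTop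
      (𝓝 (expSeries c φ x₀)) := by
    simp only [expSeries_add d φ x₀]
    refine tendsto_expSeries hdc φ (fun n k => (norm_mul_exp_neg_I_mul _ _ _).le) (fun k => ?_) x₀
    have hconj : ∀ n, Complex.exp (-Complex.I * φ k * (-(x (s n) + s n) : ℝ)) =
        star (e (s n) k) := by
      intro n
      simp only [he, Complex.star_def, ← Complex.exp_conj]
      congr 1
      simp
      ring
    simp only [hconj]
    have h2 : Tendsto (fun n => d k * star (e (s n) k)) atTop (𝓝 (d k * star (z k))) :=
      (hsz' k).star.const_mul _
    have h3 : d k * star (z k) = c k := by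
      simp only [hd]
      rw [mul_assoc, Complex.star_def, Complex.mul_conj, Complex.normSq_eq_norm_sq, hz1]
      simp
    rwa [h3] at h2
  simp only [hzero] at hlim2
  exact hx₀ (tendsto_nhds_unique hlim2 tendsto_const_nhds)

end AlmostPeriodic

/-- `T` is a bounded monotone function controlling the increments of `γ`. -/
structure IsVariationBound (γ T : ℝ → ℝ) (K : ℝ) : Prop where
  mono : Monotone T
  abs_sub_le : ∀ x y, x ≤ y → |γ y - γ x| ≤ T y - T x
  bound : ∀ x, |T x| ≤ K

theorem IsVariationBound.zero : IsVariationBound 0 0 0 :=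
  ⟨monotone_const, by simp, by simp⟩

theorem IsVariationBound.const_mul {γ T : ℝ → ℝ} {K : ℝ} (h : IsVariationBound γ T K) {a : ℝ}
    (ha : 0 ≤ a) : IsVariationBound (fun x => a * γ x) (fun x => a * T x) (a * K) := by
  refine ⟨fun x y hxy => mul_le_mul_of_nonneg_left (h.mono hxy) ha, fun x y hxy => ?_, fun x => ?_⟩
  · rw [← mul_sub, ← mul_sub, abs_mul, abs_of_nonneg ha]
    exact mul_le_mul_of_nonneg_left (h.abs_sub_le x y hxy) ha
  · rw [abs_mul, abs_of_nonneg ha]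
    exact mul_le_mul_of_nonneg_left (h.bound x) ha

theorem BoundedVariationOn.exists_isVariationBound {γ : ℝ → ℝ}
    (h : BoundedVariationOn γ (Ioi 0)) :
    ∃ T K, IsVariationBound ((Ioi 0).indicator γ) T K := by
  have hl := h.locallyBoundedVariationOn
  have h1 : (1:ℝ) ∈ Ioi (0:ℝ) := zero_lt_one' ℝ
  set v : ℝ → ℝ := variationOnFromTo γ (Ioi 0) 1 with hv
  set W := (eVariationOn γ (Ioi 0)).toReal with hW
  have hsub : ∀ x y, 0 < x → x ≤ y → |γ y - γ x| ≤ v y - v x := fun x y hx hxy => by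
    have hadd := variationOnFromTo.add hl h1 hx (hx.trans_le hxy)
    have h2 : |γ y - γ x| ≤ variationOnFromTo γ (Ioi 0) x y := by
      rw [variationOnFromTo.eq_of_le γ _ hxy, abs_sub_comm, ← Real.dist_eq,
        ← ENNReal.toReal_ofReal dist_nonneg, ← edist_dist]
      exact ENNReal.toReal_mono (hl _ _ hx (hx.trans_le hxy))
        (eVariationOn.edist_le γ ⟨hx, le_rfl, hxy⟩ ⟨hx.trans_le hxy, hxy, le_rfl⟩)
    simp only [hv]
    linarith
  have hvW : ∀ x, |v x| ≤ W := fun x => by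
    rcases le_total 1 x with hx | hx
    · rw [abs_of_nonneg (variationOnFromTo.nonneg_of_le _ _ hx),
        variationOnFromTo.eq_of_le _ _ hx]
      exact ENNReal.toReal_mono h (eVariationOn.mono γ inter_subset_left)
    · rw [abs_of_nonpos (variationOnFromTo.nonpos_of_ge _ _ hx),
        variationOnFromTo.eq_of_ge _ _ hx, neg_neg]
      exact ENNReal.toReal_mono h (eVariationOn.mono γ inter_subset_left)
  have hγW : ∀ x, 0 < x → |γ x| ≤ |γ 1| + W := fun x hx => by
    have h3 : |γ x - γ 1| ≤ W := by
      rcases le_total 1 x with hx1 | hx1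
      · have h4 := hsub 1 x h1 hx1
        rw [show v 1 = 0 from variationOnFromTo.self _ _ _, sub_zero] at h4
        exact h4.trans ((le_abs_self _).trans (hvW x))
      · have h4 := hsub x 1 hx hx1
        rw [show v 1 = 0 from variationOnFromTo.self _ _ _, zero_sub, abs_sub_comm] at h4
        exact h4.trans ((neg_le_abs _).trans (hvW x))
    linarith [abs_sub_abs_le_abs_sub (γ x) (γ 1)]
  have hW0 : 0 ≤ W := ENNReal.toReal_nonneg
  have hinc : ∀ x y, x ≤ y → |(Ioi 0).indicator γ y - (Ioi 0).indicator γ x| ≤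
      (Ioi 0).indicator (fun x => |γ 1| + 2 * W + v x) y -
        (Ioi 0).indicator (fun x => |γ 1| + 2 * W + v x) x := fun x y hxy => by
    rcases lt_or_ge 0 x with hx | hx
    · rw [indicator_of_mem (mem_Ioi.2 hx), indicator_of_mem (mem_Ioi.2 (hx.trans_le hxy)),
        indicator_of_mem (mem_Ioi.2 hx), indicator_of_mem (mem_Ioi.2 (hx.trans_le hxy))]
      linarith [hsub x y hx hxy]
    · rw [indicator_of_notMem (notMem_Ioi.2 hx), indicator_of_notMem (notMem_Ioi.2 hx), sub_zero,
        sub_zero]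
      rcases lt_or_ge 0 y with hy | hy
      · rw [indicator_of_mem (mem_Ioi.2 hy), indicator_of_mem (mem_Ioi.2 hy)]
        linarith [hγW y hy, (abs_le.1 (hvW y)).1]
      · rw [indicator_of_notMem (notMem_Ioi.2 hy), indicator_of_notMem (notMem_Ioi.2 hy), abs_zero]
  refine ⟨(Ioi 0).indicator fun x => |γ 1| + 2 * W + v x, |γ 1| + 3 * W, fun x y hxy => ?_, hinc,
    fun x => ?_⟩
  · linarith [hinc x y hxy, abs_nonneg ((Ioi 0).indicator γ y - (Ioi 0).indicator γ x)]
  · rcases lt_or_ge 0 x with hx | hx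
    · rw [indicator_of_mem (mem_Ioi.2 hx), abs_le]
      have := abs_le.1 (hvW x)
      constructor <;> linarith [abs_nonneg (γ 1)]
    · rw [indicator_of_notMem (notMem_Ioi.2 hx), abs_zero]
      positivity

namespace IsVariationBound

variable {γ T : ℝ → ℝ} {K : ℝ}

theorem monotone_sub (h : IsVariationBound γ T K) : Monotone fun x => T x - γ x := fun x y hxy => by
  have := (abs_le.1 (h.abs_sub_le x y hxy)).2
  beta_reduce
  linarith

theorem eq_sub (T γ : ℝ → ℝ) : γ = fun x => T x - (T x - γ x) := by
  ext; simp

theorem measurable (h : IsVariationBound γ T K) : Measurable γ := by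
  rw [eq_sub T γ]
  exact h.mono.measurable.sub h.monotone_sub.measurable

theorem intervalIntegrable (h : IsVariationBound γ T K) (a b : ℝ) :
    IntervalIntegrable γ volume a b := by
  rw [eq_sub T γ]
  exact h.mono.intervalIntegrable.sub h.monotone_sub.intervalIntegrable

theorem countable_not_continuousAt (h : IsVariationBound γ T K) :
    {x | ¬ ContinuousAt γ x}.Countable := by
  refine (h.mono.countable_not_continuousAt.union
    h.monotone_sub.countable_not_continuousAt).mono fun x hx => ?_
  by_contra hn
  simp only [mem_union, Set.mem_ofPred_eq, not_or, not_not] at hn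
  apply hx
  rw [eq_sub T γ]
  exact hn.1.sub hn.2

theorem abs_sub_le_of_mem (h : IsVariationBound γ T K) {x s d : ℝ} (hs : s ∈ Icc x (x + d)) :
    |γ s - γ x| ≤ T (x + d) - T x :=
  (h.abs_sub_le x s hs.1).trans (sub_le_sub_right (h.mono hs.2) _)

theorem integrableOn_increment (h : IsVariationBound γ T K) {d : ℝ} (hd : 0 ≤ d) (X : ℝ) :
    IntegrableOn (fun x => T (x + d) - T x) (Ioi X) := by
  have hT : ∀ a b, IntervalIntegrable T volume a b := fun a b => h.mono.intervalIntegrable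
  have hTd : ∀ a b, IntervalIntegrable (fun x => T (x + d)) volume a b := fun a b =>
    Monotone.intervalIntegrable fun x y hxy => h.mono (by linarith)
  have h0 : ∀ x, 0 ≤ T (x + d) - T x := fun x => sub_nonneg.2 (h.mono (by linarith))
  refine integrableOn_Ioi_of_intervalIntegral_norm_bounded (l := atTop) (b := id) (2 * K * d) X
    (fun i => ?_) tendsto_id ?_
  · exact ((hTd X i).sub (hT X i)).1
  · refine Eventually.of_forall fun b => ?_
    have e1 : ∀ x, ‖T (x + d) - T x‖ = T (x + d) - T x := fun x => Real.norm_of_nonneg (h0 x)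
    simp only [e1, id]
    rw [intervalIntegral.integral_sub (hTd _ _) (hT _ _), intervalIntegral.integral_comp_add_right,
      intervalIntegral.integral_interval_sub_interval_comm' (hT _ _) (hT _ _) (hT _ _)]
    have hb : ∀ a, |∫ x in a..a + d, T x| ≤ K * d := fun a => by
      have := intervalIntegral.norm_integral_le_of_norm_le_const (a := a) (b := a + d) (f := T)
        (C := K) fun x _ => h.bound x
      rwa [add_sub_cancel_left, abs_of_nonneg hd] at this
    have h1 := abs_le.1 (hb b)
    have h2 := abs_le.1 (hb X)
    linarith [h1.2, h2.1]

theorem increment_le (h : IsVariationBound γ T K) (d x : ℝ) : T (x + d) - T x ≤ 2 * K := by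
  linarith [(abs_le.1 (h.bound (x + d))).2, (abs_le.1 (h.bound x)).1]

theorem increment_nonneg (h : IsVariationBound γ T K) {d : ℝ} (hd : 0 ≤ d) (x : ℝ) :
    0 ≤ T (x + d) - T x := sub_nonneg.2 (h.mono (by linarith))

theorem tendsto_increment (h : IsVariationBound γ T K) (d : ℝ) :
    Tendsto (fun x => T (x + d) - T x) atTop (𝓝 0) := by
  have hb : BddAbove (range T) := ⟨K, by rintro _ ⟨x, rfl⟩; exact (abs_le.1 (h.bound x)).2⟩
  have h1 := tendsto_atTop_ciSup h.mono hb
  have h2 := h1.comp (tendsto_atTop_add_const_right atTop d tendsto_id)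
  simpa using h2.sub h1

theorem abs_average_sub_le {f : ℝ → ℝ} (hf : ∀ a b, IntervalIntegrable f volume a b) {x a e : ℝ}
    (hb : ∀ s ∈ Icc x (x + 1), |f s - a| ≤ e) : |(∫ s in x..x + 1, f s) - a| ≤ e := by
  have h1 : (∫ s in x..x + 1, (f s - a)) = (∫ s in x..x + 1, f s) - a := by
    rw [intervalIntegral.integral_sub (hf _ _) intervalIntegrable_const]
    simp
  rw [← h1]
  have := intervalIntegral.norm_integral_le_of_norm_le_const (a := x) (b := x + 1)
    (f := fun s => f s - a) (C := e) fun s hs => by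
      rw [uIoc_of_le (by linarith)] at hs
      exact hb s ⟨hs.1.le, hs.2⟩
  simpa using this

theorem exists_smoothing (h : IsVariationBound γ T K) :
    ∃ g g' : ℝ → ℝ, (∀ x, HasDerivAt g (g' x) x) ∧ (∀ x, |g' x| ≤ T (x + 2) - T x) ∧
      ∀ x, |g x - γ x| ≤ T (x + 2) - T x := by
  have hi := h.intervalIntegrable
  have hbase : Continuous fun x => ∫ s in (0:ℝ)..x, γ s :=
    intervalIntegral.continuous_primitive hi 0
  have hsplit : ∀ {f : ℝ → ℝ}, (∀ a b, IntervalIntegrable f volume a b) →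
      (fun x => ∫ s in x..x + 1, f s) =
        fun x => (∫ s in (0:ℝ)..x + 1, f s) - ∫ s in (0:ℝ)..x, f s := fun hf => by
    ext x
    rw [intervalIntegral.integral_interval_sub_left (hf _ _) (hf _ _)]
  have hc : Continuous fun x => ∫ s in x..x + 1, γ s := by
    rw [hsplit hi]
    exact (hbase.comp (continuous_id.add continuous_const)).sub hbase
  set γ₁ : ℝ → ℝ := fun x => ∫ s in x..x + 1, γ s with hγ₁
  have hi1 : ∀ a b, IntervalIntegrable γ₁ volume a b := fun a b => hc.intervalIntegrable a b
  refine ⟨fun x => ∫ s in x..x + 1, γ₁ s, fun x => γ₁ (x + 1) - γ₁ x, fun x => ?_, fun x => ?_,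
    fun x => ?_⟩
  · rw [hsplit hi1]
    have h1 := intervalIntegral.integral_hasDerivAt_right (hi1 0 x)
      (hc.stronglyMeasurableAtFilter _ _) hc.continuousAt
    have h2 := intervalIntegral.integral_hasDerivAt_right (hi1 0 (x + 1))
      (hc.stronglyMeasurableAtFilter _ _) hc.continuousAt
    exact (h2.comp_add_const x 1).sub h1
  · have e1 : γ₁ (x + 1) = ∫ s in x..x + 1, γ (s + 1) := by
      simp only [hγ₁]
      rw [intervalIntegral.integral_comp_add_right]
    have hi' : ∀ a b, IntervalIntegrable (fun s => γ (s + 1)) volume a b := fun a b => by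
      simpa using (hi (a + 1) (b + 1)).comp_add_right 1
    have := abs_average_sub_le (f := fun s => γ (s + 1) - γ s)
      (fun a b => (hi' a b).sub (hi a b)) (x := x) (a := 0) (e := T (x + 2) - T x) fun s hs => by
        rw [sub_zero]
        refine (h.abs_sub_le s (s + 1) (by linarith)).trans ?_
        have := h.mono hs.1
        have := h.mono (show s + 1 ≤ x + 2 by linarith [hs.2])
        linarith
    rw [sub_zero, intervalIntegral.integral_sub (hi' _ _) (hi _ _)] at this
    change |γ₁ (x + 1) - γ₁ x| ≤ _
    rwa [e1]
  · refine abs_average_sub_le hi1 fun s hs => abs_average_sub_le hi fun r hr => ?_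
    exact h.abs_sub_le_of_mem ⟨hs.1.trans hr.1, by linarith [hr.2, hs.2]⟩

end IsVariationBound

theorem IsVariationBound.pow_le_integrable {γ T : ℝ → ℝ} {K : ℝ} (h : IsVariationBound γ T K)
    {ω : ℝ → ℝ} (hω : Continuous ω) {M : ℝ} (hM : ∀ x, |ω x| ≤ M) {p : ℕ} (hp : p ≠ 0)
    (hinteg : IntegrableOn (fun x => |γ x * ω x| ^ p) (Ioi 1)) {N δ : ℝ} (hN : 0 ≤ N) (hδ : 0 < δ)
    (hlow : ∀ x, δ ≤ ∫ y in x..x + N, |ω y| ^ p) :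
    ∃ R : ℝ → ℝ, IntegrableOn R (Ioi 1) ∧ Tendsto R atTop (𝓝 0) ∧ ∀ x > 1, |γ x| ^ p ≤ R x := by
  set P : ℝ → ℝ := (Ioi 1).indicator fun x => |γ x * ω x| ^ p with hP
  have hPi : Integrable P := (integrable_indicator_iff measurableSet_Ioi).2 hinteg
  have hP0 : ∀ x, 0 ≤ P x := fun x => indicator_nonneg (fun _ _ => by positivity) x
  set Φ : ℝ → ℝ := fun x => ∫ y in Iic x, P y with hΦ
  have hΦm : Monotone Φ := fun x y hxy =>
    setIntegral_mono_set hPi.integrableOn (Eventually.of_forall hP0)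
      (Iic_subset_Iic.2 hxy).eventuallyLE
  have hΦb : IsVariationBound Φ Φ (∫ y, P y) := by
    refine ⟨hΦm, fun x y hxy => (abs_of_nonneg (sub_nonneg.2 (hΦm hxy))).le, fun x => ?_⟩
    rw [abs_of_nonneg (integral_nonneg hP0)]
    exact setIntegral_le_integral hPi (Eventually.of_forall hP0)
  have hΦd : ∀ x, Φ (x + N) - Φ x = ∫ y in x..x + N, P y := fun x =>
    intervalIntegral.integral_Iic_sub_Iic hPi.integrableOn hPi.integrableOn
  have hK : 0 ≤ K := (abs_nonneg _).trans (h.bound 0)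
  have hM0 : 0 ≤ M := (abs_nonneg _).trans (hM 0)
  set D : ℝ := N * (M ^ p * (2 * K) ^ (p - 1)) with hD
  refine ⟨fun x => 2 ^ (p - 1) / δ * ((Φ (x + N) - Φ x) + D * (T (x + N) - T x)),
    ((hΦb.integrableOn_increment hN 1).add ((h.integrableOn_increment hN 1).const_mul D)).const_mul _,
    ?_, fun x hx => ?_⟩
  · simpa using ((hΦb.tendsto_increment N).add ((h.tendsto_increment N).const_mul D)).const_mul
      ((2:ℝ) ^ (p - 1) / δ)
  · set t := T (x + N) - T x with ht
    have ht0 : 0 ≤ t := h.increment_nonneg hN x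
    have htp : t ^ p ≤ (2 * K) ^ (p - 1) * t := by
      obtain ⟨m, rfl⟩ := Nat.exists_eq_succ_of_ne_zero hp
      rw [Nat.succ_sub_one, pow_succ]
      exact mul_le_mul_of_nonneg_right (pow_le_pow_left₀ ht0 (h.increment_le N x) m) ht0
    have key : ∀ y ∈ Icc x (x + N),
        |γ x| ^ p * |ω y| ^ p ≤ 2 ^ (p - 1) * (P y + M ^ p * ((2 * K) ^ (p - 1) * t)) := by
      intro y hy
      have hy1 : y ∈ Ioi (1:ℝ) := lt_of_lt_of_le hx hy.1
      have h1 : |γ x| * |ω y| ≤ |γ y * ω y| + t * M := by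
        have h2 := h.abs_sub_le_of_mem hy
        have h3 : |γ x| ≤ |γ y| + t := by
          have := abs_sub_abs_le_abs_sub (γ x) (γ y)
          rw [abs_sub_comm] at this
          linarith
        rw [abs_mul]
        calc |γ x| * |ω y| ≤ (|γ y| + t) * |ω y| := by gcongr
          _ = |γ y| * |ω y| + t * |ω y| := by ring
          _ ≤ _ := by gcongr; exact hM y
      calc |γ x| ^ p * |ω y| ^ p = (|γ x| * |ω y|) ^ p := (mul_pow _ _ _).symm
        _ ≤ (|γ y * ω y| + t * M) ^ p := by gcongr
        _ ≤ 2 ^ (p - 1) * (|γ y * ω y| ^ p + (t * M) ^ p) :=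
          add_pow_le (abs_nonneg _) (by positivity) p
        _ ≤ _ := by
          rw [hP, indicator_of_mem hy1, mul_pow, mul_comm (t ^ p)]
          gcongr
    have hmono := intervalIntegral.integral_mono_on (a := x) (b := x + N) (by linarith)
      (((hω.abs.pow p).const_mul (|γ x| ^ p)).intervalIntegrable _ _)
      (((hPi.intervalIntegrable (a := x) (b := x + N)).add
        (intervalIntegrable_const (c := M ^ p * ((2 * K) ^ (p - 1) * t)))).const_mul (2 ^ (p - 1)))
      key
    rw [intervalIntegral.integral_const_mul, intervalIntegral.integral_const_mul,
      intervalIntegral.integral_add hPi.intervalIntegrable intervalIntegrable_const,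
      ← hΦd, intervalIntegral.integral_const, add_sub_cancel_left, smul_eq_mul] at hmono
    have h4 : |γ x| ^ p * δ ≤ 2 ^ (p - 1) * ((Φ (x + N) - Φ x) + D * t) := by
      refine (mul_le_mul_of_nonneg_left (hlow x) (by positivity)).trans (hmono.trans_eq ?_)
      rw [hD]; ring
    beta_reduce
    rw [div_mul_eq_mul_div, le_div_iff₀ hδ]
    exact h4

theorem exists_integral_le_of_integrableOn_Ioi {ε : ℝ → ℝ} {X : ℝ} (hε : IntegrableOn ε (Ioi X))
    {r : ℝ} (hr : 0 < r) : ∃ Y > X, ∀ z ≥ Y, ∫ x in Y..z, ε x ≤ r := by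
  have h1 := (intervalIntegral_tendsto_integral_Ioi X hε tendsto_id).eventually
    (Metric.closedBall_mem_nhds _ (half_pos hr))
  obtain ⟨Y₀, hY₀⟩ := eventually_atTop.1 h1
  have hX : X < max Y₀ (X + 1) := lt_max_of_lt_right (by linarith)
  refine ⟨max Y₀ (X + 1), hX, fun z hz => ?_⟩
  have h2 := hY₀ _ (le_max_left Y₀ (X + 1))
  have h3 := hY₀ z ((le_max_left _ _).trans hz)
  have hi : ∀ b, X ≤ b → IntervalIntegrable ε volume X b := fun b hb =>
    (intervalIntegrable_iff_integrableOn_Ioc_of_le hb).2 (hε.mono_set Ioc_subset_Ioi_self)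
  rw [← intervalIntegral.integral_interval_sub_left (hi z (hX.le.trans hz)) (hi _ hX.le)]
  simp only [id, Real.dist_eq] at h2 h3
  have habs := abs_le.1 h2
  have hbound := abs_le.1 h3
  linarith [habs.1, hbound.2]

/-- A Grönwall-type bound with an integrable coefficient, allowing a countable exceptional set. -/
theorem exists_bound_of_abs_deriv_le {h h' ε : ℝ → ℝ} {X : ℝ} {s : Set ℝ} (hs : s.Countable)
    (hh0 : ∀ x > X, 0 ≤ h x) (hc : ContinuousOn h (Ioi X))
    (hd : ∀ x > X, x ∉ s → HasDerivAt h (h' x) x) (hε : IntegrableOn ε (Ioi X))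
    (hb : ∀ x > X, x ∉ s → |h' x| ≤ ε x * h x) : ∃ C, ∃ Y > X, ∀ x ≥ Y, h x ≤ C := by
  obtain ⟨Y, hY, hYε⟩ := exists_integral_le_of_integrableOn_Ioi hε.abs (half_pos one_pos)
  refine ⟨2 * h Y, Y, hY, fun z hz => ?_⟩
  have hsub : Icc Y z ⊆ Ioi X := fun x hx => lt_of_lt_of_le hY hx.1
  obtain ⟨m, hm, hmax⟩ := isCompact_Icc.exists_isMaxOn ⟨Y, left_mem_Icc.2 hz⟩ (hc.mono hsub)
  have hsub' : Icc Y m ⊆ Icc Y z := Icc_subset_Icc_right hm.2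
  have hbd : ∀ x ∈ Ioc Y m, x ∉ s → ‖deriv h x‖ ≤ |ε x| * h m := fun x hx hxs => by
    have hx' := hsub' (Ioc_subset_Icc_self hx)
    rw [(hd x (hsub hx') hxs).deriv, Real.norm_eq_abs]
    exact (hb x (hsub hx') hxs).trans (mul_le_mul (le_abs_self _) (hmax hx') (hh0 _ (hsub hx'))
      (abs_nonneg _))
  have hbd' : ∀ᵐ x ∂volume.restrict (Ioc Y m), ‖deriv h x‖ ≤ |ε x| * h m := by
    rw [ae_restrict_iff' measurableSet_Ioc]
    filter_upwards [hs.ae_notMem volume] with x hxs hx using hbd x hx hxs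
  have hεi : IntervalIntegrable (fun x => |ε x| * h m) volume Y m :=
    (((intervalIntegrable_iff_integrableOn_Ioc_of_le hm.1).2
      (IntegrableOn.mono_set hε.abs fun x hx => hY.trans hx.1))).mul_const _
  have hdi : IntervalIntegrable (deriv h) volume Y m := by
    rw [intervalIntegrable_iff_integrableOn_Ioc_of_le hm.1] at hεi ⊢
    exact Integrable.mono' hεi (measurable_deriv h).aestronglyMeasurable hbd'
  have hftc := integral_eq_of_hasDerivAt_off_countable_of_le h (deriv h) hm.1 hs
    (hc.mono (hsub'.trans hsub)) (fun x hx => by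
      have := hd x (hsub (hsub' (Ioo_subset_Icc_self hx.1))) hx.2
      rwa [this.deriv]) hdi
  have hle : ∫ x in Y..m, deriv h x ≤ ∫ x in Y..m, |ε x| * h m := by
    refine intervalIntegral.integral_mono_ae_restrict hm.1 hdi hεi ?_
    rw [← Measure.restrict_congr_set Ioc_ae_eq_Icc]
    filter_upwards [hbd'] with x hx using (le_abs_self _).trans hx
  rw [intervalIntegral.integral_mul_const] at hle
  have h5 := mul_le_mul_of_nonneg_right (hYε m hm.1) (hh0 m (hsub hm))
  have h6 : h z ≤ h m := hmax (right_mem_Icc.2 hz)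
  linarith

theorem re_star_mul_sub (g w d : ℂ) :
    (star g * (w * g - d)).re = w.re * ‖g‖ ^ 2 - (star g * d).re := by
  rw [← Complex.normSq_eq_norm_sq, Complex.normSq_apply]
  simp
  ring

theorem re_neg_I_mul_add (v : ℂ) (k r : ℝ) :
    (-Complex.I * k + Complex.I * r * (1 - v)).re = r * v.im := by
  simp

theorem re_star_mul_riccati (v e : ℂ) (η r : ℝ) :
    (star v * (-Complex.I * η * v - Complex.I * r * (1 - v) ^ 2 + e)).re =
      -(r * v.im * (1 - ‖v‖ ^ 2)) + (star v * e).re := by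
  rw [← Complex.normSq_eq_norm_sq, Complex.normSq_apply]
  simp [pow_two]
  ring

/-- Boundedness of real solutions from an approximate Riccati-type reduction. -/
theorem exists_bound_of_approx_reduction {k X : ℝ} (hk : 0 < k) {u u' V ε : ℝ → ℝ} {v e : ℝ → ℂ}
    {s : Set ℝ} (hs : s.Countable) (hu : ∀ x > X, HasDerivAt u (u' x) x)
    (huc : ContinuousOn u' (Ioi X))
    (hu' : ∀ x > X, x ∉ s → HasDerivAt u' ((V x - k ^ 2) * u x) x)
    (hv : ∀ x > X, HasDerivAt v (-Complex.I * (2 * k : ℝ) * v x -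
      Complex.I * (V x / (2 * k) : ℝ) * (1 - v x) ^ 2 + e x) x)
    (hvb : ∀ x > X, ‖v x‖ ≤ 1 / 2) (hε : IntegrableOn ε (Ioi X)) (he : ∀ x > X, ‖e x‖ ≤ ε x) :
    ∃ C, ∃ Y > X, ∀ x ≥ Y, |u x| ≤ C := by
  have hk' : (k:ℂ) ≠ 0 := by exact_mod_cast hk.ne'
  set A : ℝ → ℂ := fun x => u' x + Complex.I * k * u x with hA
  set g : ℝ → ℂ := fun x => (u' x - Complex.I * k * u x) - v x * A x with hg
  set N : ℝ → ℝ := fun x => 1 - ‖v x‖ ^ 2 with hN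
  have hNpos : ∀ x > X, 3 / 4 ≤ N x := fun x hx => by
    have := pow_le_pow_left₀ (norm_nonneg _) (hvb x hx) 2
    simp only [hN]; linarith
  have hBA : ∀ x, ‖(u' x - Complex.I * k * u x : ℂ)‖ = ‖A x‖ := fun x => by
    rw [← Complex.norm_conj (A x)]
    congr 1
    simp [hA, sub_eq_add_neg]
  have hAg : ∀ x > X, ‖A x‖ ≤ 2 * ‖g x‖ := fun x hx => by
    have h1 : ‖A x‖ - ‖v x * A x‖ ≤ ‖g x‖ := by rw [← hBA x]; exact norm_sub_norm_le _ _
    rw [norm_mul] at h1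
    nlinarith [norm_nonneg (A x), hvb x hx]
  have hkey : ∃ C, ∃ Y > X, ∀ x ≥ Y, ‖g x‖ ^ 2 / N x ≤ C := by
    refine exists_bound_of_abs_deriv_le (h' := fun x => (-2 * (star (g x) * e x * A x).re * N x +
      ‖g x‖ ^ 2 * (2 * (star (v x) * e x).re)) / N x ^ 2) hs (fun x hx => ?_) ?_
      (fun x hx hxs => ?_) (hε.const_mul 6) (fun x hx _ => ?_)
    · have := hNpos x hx
      positivity
    · have hu0 : ContinuousOn (fun x => (u x : ℂ)) (Ioi X) := fun x hx =>
        (hu x hx).ofReal_comp.continuousAt.continuousWithinAt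
      have hv0 : ContinuousOn v (Ioi X) := fun x hx => (hv x hx).continuousAt.continuousWithinAt
      have huc' : ContinuousOn (fun x => (u' x : ℂ)) (Ioi X) :=
        Complex.continuous_ofReal.comp_continuousOn huc
      have hA0 : ContinuousOn A (Ioi X) := huc'.add (continuousOn_const.mul hu0)
      refine ContinuousOn.div ?_ (continuousOn_const.sub (hv0.norm.pow 2))
        fun x hx => by linarith [hNpos x hx]
      exact (((huc'.sub (continuousOn_const.mul hu0)).sub (hv0.mul hA0))).norm.pow 2
    · have h1 := (hu x hx).ofReal_comp
      have h2 := (hu' x hx hxs).ofReal_comp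
      have hAd : HasDerivAt A _ x := h2.add (h1.const_mul (Complex.I * k))
      have hgd : HasDerivAt g ((-Complex.I * k + Complex.I * (V x / (2 * k) : ℝ) * (1 - v x)) * g x
          - e x * A x) x := by
        refine ((h2.sub (h1.const_mul (Complex.I * k))).sub ((hv x hx).mul hAd)).congr_deriv ?_
        simp only [hg, hA]
        push_cast
        field_simp
        ring_nf
        rw [Complex.I_sq]
        ring
      have hg2 := hgd.norm_sq
      have hN2 := (hv x hx).norm_sq.const_sub 1
      refine (hg2.div hN2 (by linarith [hNpos x hx])).congr_deriv ?_
      rw [Complex.inner, Complex.inner, mul_comm (_ - _) (starRingEnd ℂ (g x)),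
        mul_comm _ (starRingEnd ℂ (v x)), ← Complex.star_def, re_star_mul_sub,
        re_star_mul_riccati, re_neg_I_mul_add, ← mul_assoc (star (g x))]
      congr 1
      simp only [hN]
      ring
    · have hN34 := hNpos x hx
      have hε0 := (norm_nonneg _).trans (he x hx)
      have b1 : |(star (g x) * e x * A x).re| ≤ 2 * ε x * ‖g x‖ ^ 2 := by
        refine (Complex.abs_re_le_norm _).trans ?_
        rw [norm_mul, norm_mul, norm_star]
        have := mul_le_mul (he x hx) (hAg x hx) (norm_nonneg _) hε0
        nlinarith [norm_nonneg (g x)]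
      have b2 : |(star (v x) * e x).re| ≤ 1 / 2 * ε x := by
        refine (Complex.abs_re_le_norm _).trans ?_
        rw [norm_mul, norm_star]
        exact mul_le_mul (hvb x hx) (he x hx) (norm_nonneg _) (by norm_num)
      have hN0 : 0 < N x := by linarith
      rw [abs_div, abs_of_nonneg (sq_nonneg (N x)), ← mul_div_assoc, div_le_div_iff₀ (by positivity)
        hN0]
      have b3 : |-2 * (star (g x) * e x * A x).re * N x + ‖g x‖ ^ 2 * (2 * (star (v x) * e x).re)| ≤
          ε x * ‖g x‖ ^ 2 * (4 * N x + 1) := by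
        rw [abs_le] at b1 b2 ⊢
        constructor <;> nlinarith [sq_nonneg ‖g x‖]
      have b4 : 0 ≤ ε x * ‖g x‖ ^ 2 := by positivity
      nlinarith [mul_nonneg b4 hN0.le]
  obtain ⟨C, Y, hY, hC⟩ := hkey
  refine ⟨2 * (1 + C) / k, Y, hY, fun x hx => ?_⟩
  have hx' : x > X := lt_of_lt_of_le hY hx
  have h1 := hC x hx
  have hN1 : N x ≤ 1 := by simp only [hN]; linarith [sq_nonneg ‖v x‖]
  have hN34 := hNpos x hx'
  have h2 : ‖g x‖ ^ 2 ≤ C := by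
    rw [div_le_iff₀ (by linarith)] at h1
    nlinarith [sq_nonneg ‖g x‖]
  have h3 : ‖g x‖ ≤ 1 + C := by nlinarith [sq_nonneg (‖g x‖ - 1)]
  rw [le_div_iff₀ hk, mul_comm]
  have h4 : k * |u x| ≤ ‖A x‖ := by
    refine le_trans ?_ (Complex.abs_im_le_norm _)
    simp [hA, abs_mul, abs_of_pos hk]
  linarith [hAg x hx']

theorem exists_bound_near_zero {k M : ℝ} {u u' V : ℝ → ℝ} {s : Set ℝ} (hs : s.Countable)
    (hu : ∀ x > 0, HasDerivAt u (u' x) x) (huc : ContinuousOn u' (Ioi 0))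
    (hu' : ∀ x > 0, x ∉ s → HasDerivAt u' ((V x - k ^ 2) * u x) x) (hV : ∀ x > 0, |V x| ≤ M) :
    ∃ C, ∃ a > 0, ∀ x > 0, x ≤ a → |u x| ≤ C := by
  have hM : 0 ≤ M := (abs_nonneg _).trans (hV 1 one_pos)
  have hinv : ∀ x : ℝ, x > 1 → x⁻¹ > 0 := fun x hx => inv_pos.2 (one_pos.trans hx)
  have hu0 : ContinuousOn u (Ioi 0) := fun x hx => (hu x hx).continuousAt.continuousWithinAt
  have key : ∃ C, ∃ Y > 1, ∀ x ≥ Y, u x⁻¹ ^ 2 + u' x⁻¹ ^ 2 ≤ C := by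
    refine exists_bound_of_abs_deriv_le (X := 1) (s := Inv.inv ⁻¹' s)
      (h := fun x => u x⁻¹ ^ 2 + u' x⁻¹ ^ 2)
      (h' := fun x => (2 * u x⁻¹ * u' x⁻¹ + 2 * u' x⁻¹ * ((V x⁻¹ - k ^ 2) * u x⁻¹)) * -(x ^ 2)⁻¹)
      (ε := fun x => (1 + M + k ^ 2) * x ^ (-2 : ℝ)) (hs.preimage inv_injective)
      (fun _ _ => by positivity) ?_ (fun x hx hxs => ?_)
      ((integrableOn_Ioi_rpow_of_lt (by norm_num) one_pos).const_mul _) fun x hx _ => ?_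
    · have hc : ContinuousOn (fun x : ℝ => x⁻¹) (Ioi 1) :=
        continuousOn_inv₀.mono fun x (hx : 1 < x) => (one_pos.trans hx).ne'
      exact ((hu0.comp hc hinv).pow 2).add ((huc.comp hc hinv).pow 2)
    · have hi := hasDerivAt_inv (one_pos.trans hx).ne'
      have h1 := (hu _ (hinv x hx)).comp x hi
      have h2 := (hu' _ (hinv x hx) hxs).comp x hi
      refine ((h1.pow 2).add (h2.pow 2)).congr_deriv ?_
      simp only [Function.comp]
      ring
    · have hx0 : 0 < x := one_pos.trans hx
      rw [Real.rpow_neg hx0.le, Real.rpow_two, abs_mul, abs_neg,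
        abs_of_pos (show 0 < (x ^ 2)⁻¹ by positivity), mul_right_comm (1 + M + k ^ 2)]
      refine mul_le_mul_of_nonneg_right ?_ (inv_nonneg.2 (sq_nonneg x))
      have hVx := abs_le.1 (hV _ (hinv x hx))
      set a := u x⁻¹
      set b := u' x⁻¹
      have h3 : |1 + (V x⁻¹ - k ^ 2)| ≤ 1 + M + k ^ 2 := by
        rw [abs_le]; constructor <;> nlinarith [sq_nonneg k]
      have h4 : |2 * a * b| ≤ a ^ 2 + b ^ 2 := by
        rw [abs_le]; constructor <;> nlinarith [sq_nonneg (a + b), sq_nonneg (a - b)]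
      calc _ = |1 + (V x⁻¹ - k ^ 2)| * |2 * a * b| := by rw [← abs_mul]; congr 1; ring
        _ ≤ _ := mul_le_mul h3 h4 (abs_nonneg _) (by positivity)
  obtain ⟨C, Y, hY, hC⟩ := key
  refine ⟨1 + C, Y⁻¹, hinv Y hY, fun x hx hxY => ?_⟩
  have h1 := hC x⁻¹ ((le_inv_comm₀ hx (one_pos.trans hY)).1 hxY)
  rw [inv_inv] at h1
  nlinarith [sq_nonneg (|u x| - 1), sq_abs (u x), sq_nonneg (u' x)]

theorem exists_bound_Ioi_zero {u : ℝ → ℝ} (hc : ContinuousOn u (Ioi 0))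
    (h0 : ∃ C, ∃ a > 0, ∀ x > 0, x ≤ a → |u x| ≤ C) (h1 : ∃ C Y, ∀ x ≥ Y, |u x| ≤ C) :
    ∃ C, ∀ x > 0, |u x| ≤ C := by
  obtain ⟨C₀, a, ha, h0⟩ := h0
  obtain ⟨C₁, Y, h1⟩ := h1
  obtain ⟨C₂, h2⟩ := isCompact_Icc.exists_bound_of_continuousOn
    (hc.mono fun x (hx : x ∈ Icc a Y) => ha.trans_le hx.1)
  refine ⟨max C₀ (max C₁ C₂), fun x hx => ?_⟩
  rcases le_total x a with h | h
  · exact (h0 x hx h).trans (le_max_left _ _)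
  · rcases le_total x Y with h' | h'
    · exact (h2 x ⟨h, h'⟩).trans ((le_max_right _ _).trans (le_max_right _ _))
    · exact (h1 x h').trans ((le_max_left _ _).trans (le_max_right _ _))

/-- Binary trees with labelled internal nodes, indexing the iterates of a quadratic recursion. -/
inductive LabelTree (κ : Type*) : Type _
  | nil : LabelTree κ
  | node : κ → LabelTree κ → LabelTree κ → LabelTree κ

namespace LabelTree

variable {κ : Type*}

/-- Number of internal nodes. -/
def size : LabelTree κ → ℕ
  | nil => 0
  | node _ l r => 1 + size l + size r

/-- Sum of a function over all labels. -/
def freq (φ : κ → ℝ) : LabelTree κ → ℝ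
  | nil => 0
  | node k l r => φ k + freq φ l + freq φ r

/-- Product of a function over all labels. -/
def weight (b : κ → ℝ) : LabelTree κ → ℝ
  | nil => 1
  | node k l r => b k * weight b l * weight b r

/-- Coefficients of the formal solution `y` of `y' = iη(1 - y) + (i/η) V y²`. -/
noncomputable def coef (c : κ → ℂ) (φ : κ → ℝ) (η : ℝ) : LabelTree κ → ℂ
  | nil => 1
  | node k l r => c k * coef c φ η l * coef c φ η r / (η * (η - (φ k + freq φ l + freq φ r)) : ℝ)

theorem weight_pos {b : κ → ℝ} (hb : ∀ k, 0 < b k) : ∀ t, 0 < weight b t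
  | nil => one_pos
  | node k l r => mul_pos (mul_pos (hb k) (weight_pos hb l)) (weight_pos hb r)

theorem weight_le_one {b : κ → ℝ} (hb : ∀ k, 0 < b k) (hb1 : ∀ k, b k ≤ 1) :
    ∀ t, weight b t ≤ 1
  | nil => le_rfl
  | node k l r => mul_le_one₀ (mul_le_one₀ (hb1 k) (weight_pos hb l).le (weight_le_one hb hb1 l))
      (weight_pos hb r).le (weight_le_one hb hb1 r)

theorem hasSum_of_node {F : LabelTree κ → ℂ} {a : ℂ}
    (h : HasSum (fun p : κ × LabelTree κ × LabelTree κ => F (node p.1 p.2.1 p.2.2)) a) :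
    HasSum F (F nil + a) := by
  classical
  let g : κ × LabelTree κ × LabelTree κ → LabelTree κ := fun p => node p.1 p.2.1 p.2.2
  have hg : Function.Injective g := by
    rintro ⟨k, l, r⟩ ⟨k', l', r'⟩ h
    simp only [g, node.injEq] at h
    simp [h]
  have h0 : HasSum (fun t : LabelTree κ => match t with | nil => 0 | node k l r => F (node k l r))
      a := by
    refine (hg.hasSum_iff ?_).1 h
    intro t ht
    cases t with
    | nil => rfl
    | node k l r => exact absurd ⟨(k, l, r), rfl⟩ ht
  have h1 : HasSum (fun t : LabelTree κ => match t with | nil => F nil | node _ _ _ => 0)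
      (F nil) := by
    refine hasSum_single nil fun t ht => ?_
    cases t with
    | nil => exact absurd rfl ht
    | node k l r => rfl
  refine (h1.add h0).congr_fun ?_
  intro t
  cases t <;> simp

theorem summable_of_node {F : LabelTree κ → ℝ}
    (h : Summable (fun p : κ × LabelTree κ × LabelTree κ => F (node p.1 p.2.1 p.2.2))) :
    Summable F := by
  have h' := Complex.summable_ofReal.2 h
  exact Complex.summable_ofReal.1 (hasSum_of_node (F := fun t => (F t : ℂ)) h'.hasSum).summable

/-- A submultiplicative bound on nodes yields summability over trees of bounded size. -/
theorem summable_indicator_size_le {F : LabelTree κ → ℝ} {e : κ → ℝ} {n : ℕ}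
    (hF0 : ∀ t, 0 ≤ F t) (he : Summable e) (he0 : ∀ k, 0 ≤ e k)
    (hF : ∀ k l r, size (node k l r) ≤ n → F (node k l r) ≤ e k * (F l * F r)) :
    Summable ({t | size t ≤ n}.indicator F) := by
  suffices h : ∀ m ≤ n, Summable ({t | size t ≤ m}.indicator F) from h n le_rfl
  intro m
  induction m with
  | zero =>
    intro _
    refine summable_of_node ?_
    refine summable_zero.congr fun p => ?_
    simp [indicator, size]
  | succ m ih =>
    intro hm
    have h := ih (by omega)
    have h0 : ∀ t, 0 ≤ ({t | size t ≤ m}.indicator F) t := indicator_nonneg fun t _ => hF0 t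
    have hprod := he.mul_of_nonneg (h.mul_of_nonneg h h0 h0) he0
      (fun p => mul_nonneg (h0 p.1) (h0 p.2))
    refine summable_of_node (Summable.of_nonneg_of_le (fun p => indicator_nonneg (fun t _ => hF0 t) _)
      (fun p => ?_) hprod)
    by_cases hs : size (node p.1 p.2.1 p.2.2) ≤ m + 1
    · have hl : size p.2.1 ≤ m := by simp only [size] at hs; omega
      have hr : size p.2.2 ≤ m := by simp only [size] at hs; omega
      rw [indicator_of_mem (by exact hs), indicator_of_mem (by exact hl),
        indicator_of_mem (by exact hr)]
      exact hF _ _ _ (by omega)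
    · rw [indicator_of_notMem (by exact hs)]
      exact mul_nonneg (he0 _) (mul_nonneg (h0 _) (h0 _))

theorem summable_weight_rpow {b : κ → ℝ} (hb : ∀ k, 0 < b k) {β : ℝ}
    (hs : Summable fun k => b k ^ β) (n : ℕ) :
    Summable ({t | size t ≤ n}.indicator fun t => weight b t ^ β) := by
  refine summable_indicator_size_le (fun t => Real.rpow_nonneg (weight_pos hb t).le _) hs
    (fun k => Real.rpow_nonneg (hb k).le _) fun k l r _ => ?_
  have h1 := (weight_pos hb l).le
  have h2 := (weight_pos hb r).le
  rw [weight, Real.mul_rpow (mul_nonneg (hb k).le h1) h2, Real.mul_rpow (hb k).le h1, mul_assoc]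

/-- Summability of the coefficients from a small-divisor condition. -/
theorem summable_coef {c : κ → ℂ} {φ : κ → ℝ} {b : κ → ℝ} {η : ℝ} {q : ℕ}
    (hη : 0 < η) (hb : ∀ k, 0 < b k) (hb1 : ∀ k, b k ≤ 1) (hc : ∀ k, ‖c k‖ = b k ^ q)
    (hbs : Summable b)
    (hD : Summable ({t | size t ≤ q}.indicator fun t => weight b t / |η - freq φ t|)) :
    Summable ({t | size t ≤ q}.indicator fun t => ‖coef c φ η t‖) := by
  classical
  set D := {t | size t ≤ q}.indicator fun t => weight b t / |η - freq φ t| with hDdef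
  have hD0 : ∀ t, 0 ≤ D t :=
    indicator_nonneg fun t _ => div_nonneg (weight_pos hb t).le (abs_nonneg _)
  have hDt : ∀ t, size t ≤ q → D t = weight b t / |η - freq φ t| := fun t ht =>
    indicator_of_mem (by exact ht) _
  set K := ∑' t, D t with hK
  have hDK : ∀ t, D t ≤ K := fun t => hD.le_tsum t fun _ _ => hD0 _
  have hK0 : 0 ≤ K := tsum_nonneg hD0
  set F : LabelTree κ → ℝ := fun t => ‖coef c φ η t‖ / weight b t ^ (q - size t) with hF
  have hF0 : ∀ t, 0 ≤ F t := fun t =>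
    div_nonneg (norm_nonneg _) (pow_nonneg (weight_pos hb t).le _)
  have hone : Summable fun k => D (node k nil nil) :=
    hD.comp_injective (i := fun k => node k nil nil) fun k k' h => by simpa using h
  have hFs : Summable ({t | size t ≤ q}.indicator F) := by
    refine summable_indicator_size_le (e := fun k => η⁻¹ * (D (node k nil nil) + K * b k)) hF0
      ((hone.add (hbs.mul_left K)).mul_left _)
      (fun k => mul_nonneg (inv_nonneg.2 hη.le) (add_nonneg (hD0 _) (mul_nonneg hK0 (hb k).le)))
      fun k l r hs => ?_
    have hwl := weight_pos hb l
    have hwr := weight_pos hb r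
    have hwl1 := weight_le_one hb hb1 l
    have hwr1 := weight_le_one hb hb1 r
    have hbk := hb k
    set n := size (node k l r) with hn
    have hnn : n = 1 + size l + size r := rfl
    have hnorm : F (node k l r) = η⁻¹ * D (node k l r) * b k ^ (n - 1) *
        (‖coef c φ η l‖ / weight b l ^ (q - n + 1)) *
        (‖coef c φ η r‖ / weight b r ^ (q - n + 1)) := by
      have hq' : b k ^ q = b k ^ (q - n) * b k * b k ^ (n - 1) := by
        rw [← pow_succ, ← pow_add]; congr 1; omega
      simp only [hF]
      rw [hDt _ hs, coef, norm_div, norm_mul, norm_mul, hc, Complex.norm_real, Real.norm_eq_abs,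
        abs_mul, abs_of_pos hη, hq', ← hn]
      simp only [weight, freq]
      rw [pow_succ, pow_succ, mul_pow, mul_pow]
      by_cases hz : |η - (φ k + freq φ l + freq φ r)| = 0
      · simp [hz]
      · field_simp
    have hl : ‖coef c φ η l‖ / weight b l ^ (q - n + 1) ≤ F l := by
      refine div_le_div_of_nonneg_left (norm_nonneg _) (pow_pos hwl _) ?_
      exact pow_le_pow_of_le_one hwl.le hwl1 (by omega)
    have hr : ‖coef c φ η r‖ / weight b r ^ (q - n + 1) ≤ F r := by
      refine div_le_div_of_nonneg_left (norm_nonneg _) (pow_pos hwr _) ?_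
      exact pow_le_pow_of_le_one hwr.le hwr1 (by omega)
    have he : D (node k l r) * b k ^ (n - 1) ≤ D (node k nil nil) + K * b k := by
      by_cases h2 : 2 ≤ n
      · have : b k ^ (n - 1) ≤ b k := by
          calc b k ^ (n - 1) ≤ b k ^ 1 := pow_le_pow_of_le_one hbk.le (hb1 k) (by omega)
            _ = b k := pow_one _
        have := mul_le_mul (hDK (node k l r)) this (by positivity) hK0
        linarith [hD0 (node k nil nil)]
      · cases l with
        | node _ _ _ => simp only [size] at hnn; omega
        | nil =>
          cases r with
          | node _ _ _ => simp only [size] at hnn; omega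
          | nil =>
            have : n - 1 = 0 := by omega
            rw [this, pow_zero, mul_one]
            have := mul_nonneg hK0 hbk.le
            linarith
    rw [hnorm, mul_assoc η⁻¹, mul_assoc]
    refine mul_le_mul (mul_le_mul_of_nonneg_left he (by positivity))
      (mul_le_mul hl hr (by positivity) (hF0 l)) (by positivity) ?_
    exact mul_nonneg (by positivity) (add_nonneg (hD0 _) (by positivity))
  refine Summable.of_nonneg_of_le (indicator_nonneg fun t _ => norm_nonneg _) (fun t => ?_) hFs
  refine indicator_le_indicator ?_
  rw [hF, le_div_iff₀ (pow_pos (weight_pos hb t) _)]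
  exact mul_le_of_le_one_right (norm_nonneg _)
    (pow_le_one₀ (weight_pos hb t).le (weight_le_one hb hb1 t))

/-- The oscillating monomial attached to a tree. -/
noncomputable def mode (φ : κ → ℝ) (g : ℝ → ℝ) (t : LabelTree κ) (x : ℝ) : ℂ :=
  (g x : ℂ) ^ size t * Complex.exp (-Complex.I * freq φ t * x)

theorem norm_mode (φ : κ → ℝ) (g : ℝ → ℝ) (t : LabelTree κ) (x : ℝ) :
    ‖mode φ g t x‖ = |g x| ^ size t := by
  rw [mode, norm_mul, norm_pow, Complex.norm_real, norm_exp_neg_I_mul, mul_one, Real.norm_eq_abs]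

theorem mode_node (φ : κ → ℝ) (g : ℝ → ℝ) (k : κ) (l r : LabelTree κ) (x : ℝ) :
    mode φ g (node k l r) x =
      g x * Complex.exp (-Complex.I * φ k * x) * (mode φ g l x * mode φ g r x) := by
  simp only [mode, size, freq]
  rw [pow_add, pow_add, pow_one]
  push_cast
  rw [show -Complex.I * (φ k + freq φ l + freq φ r : ℂ) * x = -Complex.I * φ k * x +
    (-Complex.I * freq φ l * x + -Complex.I * freq φ r * x) by ring, Complex.exp_add,
    Complex.exp_add]
  ring

theorem hasDerivAt_mode (φ : κ → ℝ) {g : ℝ → ℝ} {g' : ℝ} (t : LabelTree κ) {x : ℝ}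
    (hg : HasDerivAt g g' x) :
    HasDerivAt (mode φ g t) (size t * (g x : ℂ) ^ (size t - 1) * g' *
      Complex.exp (-Complex.I * freq φ t * x) + mode φ g t x * (-Complex.I * freq φ t)) x := by
  have h1 : HasDerivAt (fun x => (g x : ℂ) ^ size t) (size t * (g x : ℂ) ^ (size t - 1) * g') x :=
    hg.ofReal_comp.pow _
  have h2 : HasDerivAt (fun x : ℝ => Complex.exp (-Complex.I * freq φ t * x))
      (Complex.exp (-Complex.I * freq φ t * x) * (-Complex.I * freq φ t)) x := by
    have := ((Complex.ofRealCLM.hasDerivAt (x := x)).const_mul (-Complex.I * freq φ t)).cexp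
    simpa using this
  refine (h1.mul h2).congr_deriv ?_
  rw [mode]
  ring

/-- Truncated tree expansion: an approximate solution of `y' = iη(1 - y) + (i/η) g W y²`, where
`W` is the almost periodic function with coefficients `c` and frequencies `φ`. -/
theorem exists_approx_solution {c : κ → ℂ} {φ : κ → ℝ} {η : ℝ} {q : ℕ} (hη : 0 < η)
    (hc : Summable fun k => ‖c k‖) (hne : ∀ t, size t ≤ q → η - freq φ t ≠ 0)
    (hY : Summable ({t | size t ≤ q}.indicator fun t => ‖coef c φ η t‖)) (M : ℝ) :
    ∃ C : ℝ, 0 ≤ C ∧ ∀ (g g' : ℝ → ℝ) (X : ℝ), (∀ x > X, HasDerivAt g (g' x) x) →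
      (∀ x > X, |g x| ≤ 1) → (∀ x > X, |g' x| ≤ M) →
      ∃ y e : ℝ → ℂ, ∀ x > X, ‖y x - 1‖ ≤ C * |g x| ∧
        ‖e x‖ ≤ C * (|g' x| + |g x| ^ (q + 1)) ∧
        HasDerivAt y (Complex.I * η * (1 - y x) + Complex.I / η *
          (g x * ∑' k, c k * Complex.exp (-Complex.I * φ k * x)) * y x ^ 2 + e x) x := by
  classical
  set Y : LabelTree κ → ℂ := {t | size t ≤ q}.indicator (coef c φ η) with hYdef
  have hYn : Summable fun t => ‖Y t‖ := by
    refine hY.congr fun t => ?_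
    rw [hYdef, norm_indicator_eq_indicator_norm]
  have hYle : ∀ t, size t ≤ q → Y t = coef c φ η t := fun t ht => indicator_of_mem (by exact ht) _
  have hYgt : ∀ t, ¬ size t ≤ q → Y t = 0 := fun t ht => indicator_of_notMem (by exact ht) _
  have hYnil : Y nil = 1 := hYle nil (by simp [size])
  set R : κ × LabelTree κ × LabelTree κ → ℂ := fun p => c p.1 * (Y p.2.1 * Y p.2.2) with hR
  have hRn : Summable fun p => ‖R p‖ := by
    have h1 := hYn.mul_of_nonneg hYn (fun _ => norm_nonneg _) (fun _ => norm_nonneg _)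
    have h2 := hc.mul_of_nonneg h1 (fun _ => norm_nonneg _)
      (fun p => mul_nonneg (norm_nonneg _) (norm_nonneg _))
    refine h2.congr fun p => ?_
    rw [hR, norm_mul, norm_mul]
  have hdiv : ∀ p : κ × LabelTree κ × LabelTree κ, size (node p.1 p.2.1 p.2.2) ≤ q →
      Y (node p.1 p.2.1 p.2.2) * (η - freq φ (node p.1 p.2.1 p.2.2) : ℝ) = R p / η := by
    intro p hp
    have hl : size p.2.1 ≤ q := by simp only [size] at hp; omega
    have hr : size p.2.2 ≤ q := by simp only [size] at hp; omega
    have h0 := hne _ hp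
    rw [hYle _ hp, hR]
    simp only
    rw [hYle _ hl, hYle _ hr, coef]
    have h1 : ((η - freq φ (node p.1 p.2.1 p.2.2) : ℝ) : ℂ) ≠ 0 := by exact_mod_cast h0
    have h2 : (η : ℂ) ≠ 0 := by exact_mod_cast hη.ne'
    rw [Complex.ofReal_mul]
    simp only [freq] at h1 ⊢
    field_simp
  have hnode : Function.Injective
      fun p : κ × LabelTree κ × LabelTree κ => node p.1 p.2.1 p.2.2 := by
    rintro ⟨k, l, r⟩ ⟨k', l', r'⟩ h
    simp only [node.injEq] at h
    simp [h]
  have hYN : Summable fun p : κ × LabelTree κ × LabelTree κ => ‖Y (node p.1 p.2.1 p.2.2)‖ :=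
    hYn.comp_injective hnode
  have hYfreq : Summable fun t => ‖Y t‖ * |freq φ t| := by
    have h1 : Summable fun t => ‖Y t‖ * |η - freq φ t| := by
      refine summable_of_node (Summable.of_nonneg_of_le (fun p => by positivity) (fun p => ?_)
        (hRn.div_const η))
      by_cases hp : size (node p.1 p.2.1 p.2.2) ≤ q
      · have := congrArg norm (hdiv p hp)
        rw [norm_mul, norm_div, Complex.norm_real, Complex.norm_real, Real.norm_eq_abs,
          Real.norm_of_nonneg hη.le] at this
        exact this.le
      · rw [hYgt _ hp]; simp; positivity
    refine Summable.of_nonneg_of_le (fun t => by positivity) (fun t => ?_)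
      ((hYn.mul_right η).add h1)
    rw [← mul_add]
    refine mul_le_mul_of_nonneg_left ?_ (norm_nonneg _)
    calc |freq φ t| = |η - (η - freq φ t)| := by ring_nf
      _ ≤ |η| + |η - freq φ t| := abs_sub _ _
      _ = _ := by rw [abs_of_pos hη]
  set S := ∑' t, ‖Y t‖ with hS
  set N₁ := ∑' p : κ × LabelTree κ × LabelTree κ, ‖Y (node p.1 p.2.1 p.2.2)‖ with hN₁
  set N₂ := ∑' p, ‖R p‖ with hN₂
  have hS0 : 0 ≤ S := tsum_nonneg fun _ => norm_nonneg _
  have hN₁0 : 0 ≤ N₁ := tsum_nonneg fun _ => norm_nonneg _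
  have hN₂0 : 0 ≤ N₂ := tsum_nonneg fun _ => norm_nonneg _
  refine ⟨q * S + N₁ + N₂ / η, by positivity, fun g g' X hg hg1 hgM => ?_⟩
  set y : ℝ → ℂ := fun x => ∑' t, Y t * mode φ g t x with hy
  set d : LabelTree κ → ℝ → ℂ := fun t x => Y t * (size t * (g x : ℂ) ^ (size t - 1) * g' x *
      Complex.exp (-Complex.I * freq φ t * x)) with hd
  have hdn : ∀ t, ∀ x > X, ‖d t x‖ ≤ ‖Y t‖ * (q * |g' x|) := by
    intro t x hx
    rw [hd, norm_mul]
    by_cases ht : size t ≤ q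
    · refine mul_le_mul_of_nonneg_left ?_ (norm_nonneg _)
      rw [norm_mul, norm_exp_neg_I_mul, mul_one, norm_mul, norm_mul, Complex.norm_real, norm_pow,
        Complex.norm_real, Real.norm_eq_abs, Real.norm_eq_abs, Complex.norm_natCast]
      refine mul_le_mul_of_nonneg_right ?_ (abs_nonneg _)
      calc (size t : ℝ) * |g x| ^ (size t - 1) ≤ size t * 1 :=
            mul_le_mul_of_nonneg_left (pow_le_one₀ (abs_nonneg _) (hg1 x hx)) (by positivity)
        _ ≤ q := by rw [mul_one]; exact_mod_cast ht
    · rw [hYgt t ht]; simp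
  have hmode1 : ∀ t, ∀ x > X, ‖mode φ g t x‖ ≤ 1 := fun t x hx => by
    rw [norm_mode]; exact pow_le_one₀ (abs_nonneg _) (hg1 x hx)
  have hsumE : ∀ x > X, Summable fun t => ‖Y t * mode φ g t x‖ := fun x hx =>
    Summable.of_nonneg_of_le (fun t => norm_nonneg _) (fun t => by
      rw [norm_mul]; exact mul_le_of_le_one_right (norm_nonneg _) (hmode1 t x hx)) hYn
  have hsumd : ∀ x > X, Summable fun t => d t x := fun x hx =>
    Summable.of_norm_bounded (hYn.mul_right (q * |g' x|)) fun t => hdn t x hx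
  have hsumf : ∀ x > X, Summable fun t => Y t * (mode φ g t x * (-Complex.I * freq φ t)) :=
    fun x hx => Summable.of_norm_bounded hYfreq fun t => by
      rw [norm_mul, norm_mul, norm_mul, norm_neg, Complex.norm_I, one_mul, Complex.norm_real,
        Real.norm_eq_abs]
      exact mul_le_mul_of_nonneg_left (mul_le_of_le_one_left (abs_nonneg _) (hmode1 t x hx))
        (norm_nonneg _)
  have hderiv : ∀ x > X, HasDerivAt y ((∑' t, d t x) +
      ∑' t, Y t * (mode φ g t x * (-Complex.I * freq φ t))) x := by
    intro x hx
    have h := hasDerivAt_tsum_of_isPreconnected (𝕜 := ℝ) (t := Ioi X) (y₀ := x) (y := x)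
      (g := fun t x => Y t * mode φ g t x)
      (g' := fun t x => d t x + Y t * (mode φ g t x * (-Complex.I * freq φ t)))
      (u := fun t => ‖Y t‖ * (q * M) + ‖Y t‖ * |freq φ t|)
      ((hYn.mul_right _).add hYfreq) isOpen_Ioi isPreconnected_Ioi ?_ ?_ hx
      (hsumE x hx).of_norm hx
    · rwa [(hsumd x hx).tsum_add (hsumf x hx)] at h
    · intro t z hz
      refine ((hasDerivAt_mode φ t (hg z hz)).const_mul (Y t)).congr_deriv ?_
      rw [hd, mul_add]
    · intro t z hz
      refine (norm_add_le _ _).trans (add_le_add ((hdn t z hz).trans ?_) ?_)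
      · exact mul_le_mul_of_nonneg_left (mul_le_mul_of_nonneg_left (hgM z hz) (by positivity))
          (norm_nonneg _)
      · rw [norm_mul, norm_mul, norm_mul, norm_neg, Complex.norm_I, one_mul, Complex.norm_real,
          Real.norm_eq_abs]
        exact mul_le_mul_of_nonneg_left (mul_le_of_le_one_left (abs_nonneg _) (hmode1 t z hz))
          (norm_nonneg _)
  set T : ℝ → κ × LabelTree κ × LabelTree κ → ℂ := fun x p =>
    if size (node p.1 p.2.1 p.2.2) ≤ q then 0 else
      -(Complex.I / η) * (R p * mode φ g (node p.1 p.2.1 p.2.2) x) with hT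
  have hTn : ∀ x > X, ∀ p, ‖T x p‖ ≤ ‖R p‖ * (|g x| ^ (q + 1) / η) := by
    intro x hx p
    simp only [hT]
    split_ifs with hp
    · rw [norm_zero]; positivity
    · rw [norm_mul, norm_neg, norm_div, Complex.norm_I, Complex.norm_real,
        Real.norm_of_nonneg hη.le, norm_mul, norm_mode, mul_left_comm, ← mul_div_right_comm, one_mul]
      exact mul_le_mul_of_nonneg_left (div_le_div_of_nonneg_right
        (pow_le_pow_of_le_one (abs_nonneg _) (hg1 x hx) (by omega)) hη.le) (norm_nonneg _)
  have hRE : ∀ x > X, Summable fun p : κ × LabelTree κ × LabelTree κ =>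
      R p * mode φ g (node p.1 p.2.1 p.2.2) x := fun x hx =>
    Summable.of_norm_bounded hRn fun p => by
      rw [norm_mul]; exact mul_le_of_le_one_right (norm_nonneg _) (hmode1 _ x hx)
  refine ⟨y, fun x => (∑' t, d t x) + ∑' p, T x p, fun x hx => ⟨?_, ?_, ?_⟩⟩
  · have hs : Summable fun p : κ × LabelTree κ × LabelTree κ =>
        Y (node p.1 p.2.1 p.2.2) * mode φ g (node p.1 p.2.1 p.2.2) x :=
      ((hsumE x hx).comp_injective hnode).of_norm
    have h1 := (hasSum_of_node (F := fun t => Y t * mode φ g t x) hs.hasSum).tsum_eq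
    have h2 : y x - 1 = ∑' p : κ × LabelTree κ × LabelTree κ,
        Y (node p.1 p.2.1 p.2.2) * mode φ g (node p.1 p.2.1 p.2.2) x := by
      rw [hy]; simp only; rw [h1, hYnil]; simp [mode, size, freq]
    rw [h2]
    calc _ ≤ N₁ * |g x| := by
          refine tsum_of_norm_bounded (hYN.hasSum.mul_right |g x|) fun p => ?_
          rw [norm_mul, norm_mode]
          refine mul_le_mul_of_nonneg_left ?_ (norm_nonneg _)
          calc |g x| ^ _ ≤ |g x| ^ 1 := pow_le_pow_of_le_one (abs_nonneg _) (hg1 x hx)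
                (by simp only [size]; omega)
            _ = _ := pow_one _
      _ ≤ _ := by
          refine mul_le_mul_of_nonneg_right ?_ (abs_nonneg _)
          have : 0 ≤ N₂ / η := by positivity
          have : 0 ≤ q * S := by positivity
          linarith
  · have h1 : ‖∑' t, d t x‖ ≤ S * (q * |g' x|) :=
      tsum_of_norm_bounded (hYn.hasSum.mul_right _) fun t => hdn t x hx
    have h2 : ‖∑' p, T x p‖ ≤ N₂ * (|g x| ^ (q + 1) / η) :=
      tsum_of_norm_bounded (hRn.hasSum.mul_right _) fun p => hTn x hx p
    refine (norm_add_le _ _).trans ((add_le_add h1 h2).trans ?_)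
    have e1 : S * (q * |g' x|) = q * S * |g' x| := by ring
    have e2 : N₂ * (|g x| ^ (q + 1) / η) = N₂ / η * |g x| ^ (q + 1) := by ring
    rw [e1, e2, mul_add]
    have : 0 ≤ N₂ / η := by positivity
    have : 0 ≤ q * S := by positivity
    refine add_le_add (mul_le_mul_of_nonneg_right (by linarith) (abs_nonneg _))
      (mul_le_mul_of_nonneg_right (by linarith) (by positivity))
  · refine (hderiv x hx).congr_deriv ?_
    set W := ∑' k, c k * Complex.exp (-Complex.I * φ k * x) with hW
    have hsq : (g x : ℂ) * W * y x ^ 2 = ∑' p : κ × LabelTree κ × LabelTree κ,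
        R p * mode φ g (node p.1 p.2.1 p.2.2) x := by
      have hcn : Summable fun k => ‖c k * Complex.exp (-Complex.I * φ k * x)‖ :=
        hc.congr fun k => by rw [norm_mul, norm_exp_neg_I_mul, mul_one]
      have hyy : y x ^ 2 = ∑' p : LabelTree κ × LabelTree κ,
          (Y p.1 * mode φ g p.1 x) * (Y p.2 * mode φ g p.2 x) := by
        rw [sq, hy]
        exact tsum_mul_tsum_of_summable_norm (hsumE x hx) (hsumE x hx)
      rw [mul_assoc, hyy, hW, tsum_mul_tsum_of_summable_norm hcn
        (summable_mul_of_summable_norm (hsumE x hx) (hsumE x hx)).norm, ← tsum_mul_left]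
      refine tsum_congr fun p => ?_
      rw [mode_node, hR]
      ring
    have hlin : (∑' t, Y t * (mode φ g t x * (-Complex.I * freq φ t))) + Complex.I * η * y x =
        Complex.I * η + ∑' p : κ × LabelTree κ × LabelTree κ, Y (node p.1 p.2.1 p.2.2) *
          mode φ g (node p.1 p.2.1 p.2.2) x *
            (Complex.I * (η - freq φ (node p.1 p.2.1 p.2.2) : ℝ)) := by
      rw [hy]
      simp only
      rw [← tsum_mul_left, ← (hsumf x hx).tsum_add ((hsumE x hx).of_norm.mul_left _)]
      have hall : Summable fun t => Y t * mode φ g t x * (Complex.I * (η - freq φ t : ℝ)) := by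
        refine ((hsumf x hx).add ((hsumE x hx).of_norm.mul_left (Complex.I * η))).congr fun t => ?_
        push_cast; ring
      have h1 := (hasSum_of_node (F := fun t => Y t * mode φ g t x *
        (Complex.I * (η - freq φ t : ℝ))) (hall.comp_injective hnode).hasSum).tsum_eq
      rw [show (∑' t, (Y t * (mode φ g t x * (-Complex.I * freq φ t)) +
        Complex.I * η * (Y t * mode φ g t x))) = ∑' t, Y t * mode φ g t x *
        (Complex.I * (η - freq φ t : ℝ)) from tsum_congr fun t => by push_cast; ring, h1, hYnil]
      congr 1
      simp [mode, size, freq]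
    have hTs : ∑' p : κ × LabelTree κ × LabelTree κ, Y (node p.1 p.2.1 p.2.2) *
          mode φ g (node p.1 p.2.1 p.2.2) x *
            (Complex.I * (η - freq φ (node p.1 p.2.1 p.2.2) : ℝ)) =
        Complex.I / η * (g x * W * y x ^ 2) + ∑' p, T x p := by
      rw [hsq, ← tsum_mul_left, ← ((hRE x hx).mul_left _).tsum_add
        (Summable.of_norm_bounded (hRn.mul_right _) fun p => hTn x hx p)]
      refine tsum_congr fun p => ?_
      simp only [hT]
      split_ifs with hp
      · rw [show Y (node p.1 p.2.1 p.2.2) * mode φ g (node p.1 p.2.1 p.2.2) x *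
          (Complex.I * (η - freq φ (node p.1 p.2.1 p.2.2) : ℝ)) =
          Y (node p.1 p.2.1 p.2.2) * (η - freq φ (node p.1 p.2.1 p.2.2) : ℝ) * (Complex.I *
            mode φ g (node p.1 p.2.1 p.2.2) x) by ring, hdiv p hp]
        ring
      · rw [hYgt _ hp]; ring
    rw [hTs] at hlin
    linear_combination hlin

end LabelTree

section WeakSolution

variable {V : ℝ → ℝ} {E : ℝ} {u u' : ℝ → ℂ}

theorem IsWeakSolution.eq_integral (h : IsWeakSolution V E u u') {a y : ℝ} (ha : 0 < a)
    (hy : a ≤ y) : u' y = u' a + ∫ t in a..y, ((V t : ℂ) * u t - (E : ℂ) * u t) := by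
  rw [← (h.2 a y ha hy).2]
  ring

theorem IsWeakSolution.continuousOn (h : IsWeakSolution V E u u') : ContinuousOn u' (Ioi 0) := by
  intro x hx
  have hx' : 0 < x := hx
  refine ContinuousAt.continuousWithinAt ?_
  have hi := (h.2 (x / 2) (x + 1) (by linarith) (by linarith)).1
  have hc := (intervalIntegral.continuousOn_primitive_interval' hi left_mem_uIcc).const_add
    (u' (x / 2))
  rw [uIcc_of_le (by linarith)] at hc
  have hn : Icc (x / 2) (x + 1) ∈ 𝓝 x := Icc_mem_nhds (by linarith) (by linarith)
  refine (hc.continuousAt hn).congr ?_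
  filter_upwards [hn] with y hy using (h.eq_integral (by linarith) hy.1).symm

theorem IsWeakSolution.hasDerivAt_deriv (h : IsWeakSolution V E u u') {x : ℝ} (hx : 0 < x)
    (hV : ContinuousAt V x) : HasDerivAt u' ((V x - E) * u x) x := by
  have hi := (h.2 (x / 2) (x + 1) (by linarith) (by linarith)).1
  have hi' := (h.2 (x / 2) x (by linarith) (by linarith)).1
  have hn : Ioc (x / 2) (x + 1) ∈ 𝓝 x := Ioc_mem_nhds (by linarith) (by linarith)
  rw [intervalIntegrable_iff_integrableOn_Ioc_of_le (by linarith)] at hi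
  have hu := (h.1 x hx).continuousAt
  have hVc : ContinuousAt (fun t => (V t : ℂ)) x := Complex.continuous_ofReal.continuousAt.comp hV
  have hd := (intervalIntegral.integral_hasDerivAt_right hi'
    (AEStronglyMeasurable.stronglyMeasurableAtFilter_of_mem hi.aestronglyMeasurable hn)
    ((hVc.mul hu).sub (continuousAt_const.mul hu))).const_add (u' (x / 2))
  refine (hd.congr_deriv (by ring)).congr_of_eventuallyEq ?_
  filter_upwards [hn] with y hy using h.eq_integral (by linarith) hy.1.le

theorem IsWeakSolution.exists_bound {k : ℝ} (h : IsWeakSolution V (k ^ 2) u u') {s : Set ℝ}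
    (hs : ∀ x > 0, x ∉ s → ContinuousAt V x)
    (hb : ∀ w w' : ℝ → ℝ, (∀ x > 0, HasDerivAt w (w' x) x) → ContinuousOn w' (Ioi 0) →
      (∀ x > 0, x ∉ s → HasDerivAt w' ((V x - k ^ 2) * w x) x) → ∃ C, ∀ x > 0, |w x| ≤ C) :
    ∃ C, ∀ x ∈ Ioi (0:ℝ), ‖u x‖ ≤ C := by
  obtain ⟨C₁, h1⟩ := hb (fun x => (u x).re) (fun x => (u' x).re)
    (fun x hx => Complex.reCLM.hasFDerivAt.comp_hasDerivAt x (h.1 x hx))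
    (Complex.continuous_re.comp_continuousOn h.continuousOn) fun x hx hxs => by
      have := Complex.reCLM.hasFDerivAt.comp_hasDerivAt x (h.hasDerivAt_deriv hx (hs x hx hxs))
      refine this.congr_deriv ?_
      rw [← Complex.ofReal_sub, Complex.reCLM_apply, Complex.re_ofReal_mul]
  obtain ⟨C₂, h2⟩ := hb (fun x => (u x).im) (fun x => (u' x).im)
    (fun x hx => Complex.imCLM.hasFDerivAt.comp_hasDerivAt x (h.1 x hx))
    (Complex.continuous_im.comp_continuousOn h.continuousOn) fun x hx hxs => by
      have := Complex.imCLM.hasFDerivAt.comp_hasDerivAt x (h.hasDerivAt_deriv hx (hs x hx hxs))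
      refine this.congr_deriv ?_
      rw [← Complex.ofReal_sub, Complex.imCLM_apply, Complex.im_ofReal_mul]
  exact ⟨C₁ + C₂, fun x hx => (Complex.norm_le_abs_re_add_abs_im _).trans
    (add_le_add (h1 x hx) (h2 x hx))⟩

end WeakSolution

theorem bounded_of_summable_coef {κ : Type*} {c : κ → ℂ} {φ : κ → ℝ} {q : ℕ} {k : ℝ} (hk : 0 < k)
    (hc : Summable fun i => ‖c i‖)
    (hne : ∀ t, LabelTree.size t ≤ q → 2 * k - LabelTree.freq φ t ≠ 0)
    (hY : Summable ({t | LabelTree.size t ≤ q}.indicator fun t =>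
      ‖LabelTree.coef c φ (2 * k) t‖))
    {γ T V R : ℝ → ℝ} {K : ℝ} (hγ : IsVariationBound γ T K)
    (hV : ∀ x > 0, (V x : ℂ) = γ x * expSeries c φ x) (hR : IntegrableOn R (Ioi 1))
    (hR0 : Tendsto R atTop (𝓝 0)) (hγR : ∀ x > 1, |γ x| ^ (q + 1) ≤ R x) {M : ℝ}
    (hM : ∀ x > 0, |V x| ≤ M) {u u' : ℝ → ℝ}
    (hu : ∀ x > 0, HasDerivAt u (u' x) x) (huc : ContinuousOn u' (Ioi 0)) {s : Set ℝ}
    (hs : s.Countable) (hu' : ∀ x > 0, x ∉ s → HasDerivAt u' ((V x - k ^ 2) * u x) x) :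
    ∃ C, ∀ x > 0, |u x| ≤ C := by
  refine exists_bound_Ioi_zero (fun x hx => (hu x hx).continuousAt.continuousWithinAt)
    (exists_bound_near_zero hs hu huc hu' hM) ?_
  obtain ⟨g, g', hg, hg', hgγ⟩ := hγ.exists_smoothing
  have hK : 0 ≤ K := (abs_nonneg _).trans (hγ.bound 0)
  set ρ : ℝ → ℝ := fun x => T (x + 2) - T x with hρ
  have hρ0 : ∀ x, 0 ≤ ρ x := hγ.increment_nonneg zero_le_two
  have hρ1 : ∀ x, ρ x ≤ 2 * K := hγ.increment_le 2
  have hρi := hγ.integrableOn_increment zero_le_two 1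
  have hρt := hγ.tendsto_increment 2
  have hgle : ∀ x, |g x| ≤ |γ x| + ρ x := fun x => by
    linarith [abs_sub_abs_le_abs_sub (g x) (γ x), hgγ x]
  obtain ⟨C, hC0, hC⟩ := LabelTree.exists_approx_solution (η := 2 * k) (by positivity) hc hne hY
    (2 * K)
  obtain ⟨X, hX1, hX⟩ : ∃ X ≥ 1, ∀ x > X, |g x| ≤ 1 ∧ C * |g x| ≤ 1 / 2 := by
    have hr : 0 < 1 / (4 * (C + 1)) := by positivity
    have e1 := hR0.eventually (gt_mem_nhds (pow_pos hr (q + 1)))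
    have e2 := hρt.eventually (gt_mem_nhds hr)
    obtain ⟨X, hX⟩ := eventually_atTop.1 (e1.and e2)
    refine ⟨max X 1, le_max_right _ _, fun x hx => ?_⟩
    obtain ⟨h1, h2⟩ := hX x ((le_max_left _ _).trans hx.le)
    have h3 := (hγR x ((le_max_right _ _).trans_lt hx)).trans_lt h1
    have h4 := lt_of_pow_lt_pow_left₀ _ hr.le h3
    have h5 : |g x| ≤ 1 / (2 * (C + 1)) := by
      have : 1 / (2 * (C + 1)) = 1 / (4 * (C + 1)) + 1 / (4 * (C + 1)) := by field_simp; norm_num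
      linarith [hgle x]
    rw [le_div_iff₀ (by positivity)] at h5
    constructor <;> nlinarith [abs_nonneg (g x), mul_nonneg hC0 (abs_nonneg (g x))]
  obtain ⟨y, e, hye⟩ := hC g g' X (fun x _ => hg x) (fun x hx => (hX x hx).1)
    fun x _ => (hg' x).trans (hρ1 x)
  set B := ∑' i, ‖c i‖ with hB
  have hB0 : 0 ≤ B := tsum_nonneg fun _ => norm_nonneg _
  have hk' : (k:ℂ) ≠ 0 := by exact_mod_cast hk.ne'
  suffices h : ∃ D, ∃ Y > X, ∀ x ≥ Y, |u x| ≤ D by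
    obtain ⟨D, Y, -, hD⟩ := h
    exact ⟨D, Y, hD⟩
  refine exists_bound_of_approx_reduction (X := X) (V := V) (v := fun x => 1 - y x)
    (e := fun x => Complex.I / (2 * k) * ((γ x - g x) * expSeries c φ x) * y x ^ 2 - e x)
    (ε := fun x => (1 / (2 * k) * B * 4 + C + C * 2 ^ q * (2 * K) ^ q) * ρ x + C * 2 ^ q * R x)
    hk hs (fun x hx => hu x (by linarith)) (huc.mono (Ioi_subset_Ioi (by linarith)))
    (fun x hx => hu' x (by linarith)) (fun x hx => ?_) (fun x hx => ?_) ?_ fun x hx => ?_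
  · refine ((hye x hx).2.2.const_sub 1).congr_deriv ?_
    rw [show (∑' i, c i * Complex.exp (-Complex.I * φ i * x)) = expSeries c φ x from rfl]
    push_cast
    rw [hV x (by linarith)]
    field_simp
    ring
  · rw [norm_sub_rev]
    exact (hye x hx).1.trans (hX x hx).2
  · exact IntegrableOn.mono_set ((hρi.const_mul _).add (hR.const_mul _)) (Ioi_subset_Ioi hX1)
  · have hy2 : ‖y x‖ ≤ 2 := by
      have h1 := norm_le_norm_add_norm_sub' (y x) 1
      have h2 := (hye x hx).1.trans (hX x hx).2
      rw [norm_one] at h1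
      linarith
    have hgp : |g x| ^ (q + 1) ≤ 2 ^ q * (R x + (2 * K) ^ q * ρ x) := by
      refine (pow_le_pow_left₀ (abs_nonneg _) (hgle x) _).trans ((add_pow_le (abs_nonneg _)
        (hρ0 x) _).trans ?_)
      rw [Nat.add_sub_cancel]
      refine mul_le_mul_of_nonneg_left (add_le_add (hγR x (by linarith)) ?_) (by positivity)
      rw [pow_succ]
      exact mul_le_mul_of_nonneg_right (pow_le_pow_left₀ (hρ0 x) (hρ1 x) q) (hρ0 x)
    have he : ‖e x‖ ≤ C * (ρ x + 2 ^ q * (R x + (2 * K) ^ q * ρ x)) :=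
      (hye x hx).2.1.trans (mul_le_mul_of_nonneg_left (add_le_add (hg' x) hgp) hC0)
    have hfirst : ‖Complex.I / (2 * k) * ((γ x - g x) * expSeries c φ x) * y x ^ 2‖ ≤
        1 / (2 * k) * (ρ x * B) * 2 ^ 2 := by
      rw [norm_mul, norm_mul, norm_mul, norm_pow, norm_div, Complex.norm_I, norm_mul,
        Complex.norm_real, Complex.norm_ofNat, Real.norm_of_nonneg hk.le]
      have hρx := hρ0 x
      gcongr
      · rw [← Complex.ofReal_sub, Complex.norm_real, Real.norm_eq_abs, abs_sub_comm]
        exact hgγ x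
      · exact norm_expSeries_le hc φ x
    refine (norm_sub_le _ _).trans ((add_le_add hfirst he).trans_eq ?_)
    ring

theorem ne_zero_and_summable_of_tsum_div_dist_ne_top {ι : Type*} {w a : ι → ℝ} (hw : ∀ i, 0 < w i)
    {η : ℝ} (h : ∑' i, ENNReal.ofReal (w i) / ENNReal.ofReal |η - a i| ≠ ⊤) :
    (∀ i, η - a i ≠ 0) ∧ Summable fun i => w i / |η - a i| := by
  have hne : ∀ i, η - a i ≠ 0 := fun i hi => by
    refine h (ENNReal.tsum_eq_top_of_eq_top ⟨i, ?_⟩)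
    rw [hi, abs_zero, ENNReal.ofReal_zero]
    exact ENNReal.div_zero (ENNReal.ofReal_pos.2 (hw i)).ne'
  refine ⟨hne, ?_⟩
  refine (ENNReal.summable_toReal h).congr fun i => ?_
  rw [ENNReal.toReal_div, ENNReal.toReal_ofReal (hw i).le, ENNReal.toReal_ofReal (abs_nonneg _)]

theorem dimH_unbounded_le {κ : Type*} {c : κ → ℂ} {φ : κ → ℝ} (hc0 : ∀ i, c i ≠ 0)
    (hc1 : ∀ i, ‖c i‖ ≤ 1) {q : ℕ} (hq : q ≠ 0) {α : ℝ} (hα : 0 < α) (hqα : q * α < 1)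
    (hs : Summable fun i => ‖c i‖ ^ α) {γ T V R : ℝ → ℝ} {K : ℝ} (hγ : IsVariationBound γ T K)
    (hV : ∀ x > 0, (V x : ℂ) = γ x * expSeries c φ x) (hR : IntegrableOn R (Ioi 1))
    (hR0 : Tendsto R atTop (𝓝 0)) (hγR : ∀ x > 1, |γ x| ^ (q + 1) ≤ R x) {M : ℝ}
    (hM : ∀ x > 0, |V x| ≤ M) :
    dimH {E : ℝ | 0 < E ∧ ∃ u u' : ℝ → ℂ, IsWeakSolution V E u u' ∧
        ¬ ∃ C : ℝ, ∀ x ∈ Set.Ioi (0:ℝ), ‖u x‖ ≤ C} ≤ ENNReal.ofReal (q * α) := by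
  have hq0 : (0:ℝ) < q := by exact_mod_cast Nat.pos_of_ne_zero hq
  have hcpos : ∀ i, 0 < ‖c i‖ := fun i => norm_pos_iff.2 (hc0 i)
  set b : κ → ℝ := fun i => ‖c i‖ ^ (1 / q : ℝ) with hb
  have hb0 : ∀ i, 0 < b i := fun i => Real.rpow_pos_of_pos (hcpos i) _
  have hb1 : ∀ i, b i ≤ 1 := fun i =>
    Real.rpow_le_one (norm_nonneg _) (hc1 i) (by positivity)
  have hbq : ∀ i, ‖c i‖ = b i ^ q := fun i => by
    rw [hb, ← Real.rpow_natCast, ← Real.rpow_mul (norm_nonneg _), one_div_mul_cancel hq0.ne',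
      Real.rpow_one]
  have hbβ : Summable fun i => b i ^ (q * α) := by
    refine hs.congr fun i => ?_
    rw [hb, ← Real.rpow_mul (norm_nonneg _), ← mul_assoc, one_div_mul_cancel hq0.ne', one_mul]
  have hbs : Summable b := Summable.of_nonneg_of_le (fun i => (hb0 i).le) (fun i => by
    simpa using Real.rpow_le_rpow_of_exponent_ge (hb0 i) (hb1 i) hqα.le) hbβ
  have hcs : Summable fun i => ‖c i‖ := Summable.of_nonneg_of_le (fun i => (hcpos i).le)
    (fun i => by rw [hbq i]; exact pow_le_of_le_one (hb0 i).le (hb1 i) hq) hbs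
  let ι := {t : LabelTree κ // LabelTree.size t ≤ q}
  have hw : ∀ t : ι, 0 < LabelTree.weight b t := fun t => LabelTree.weight_pos hb0 t
  have hsum : Summable fun t : ι => LabelTree.weight b t ^ (q * α) :=
    summable_subtype_iff_indicator.2 (LabelTree.summable_weight_rpow hb0 hbβ q)
  have hdim := dimH_tsum_div_dist_eq_top_le (fun t : ι => LabelTree.weight b t)
    (fun t : ι => LabelTree.freq φ t) hw (mul_pos hq0 hα) hqα hsum
  have hf : ContDiff ℝ 1 fun η : ℝ => (η / 2) ^ 2 := by fun_prop
  refine (dimH_mono ?_).trans ((ContDiffOn.dimH_image_le hf.contDiffOn convex_univ (subset_univ _)).trans hdim)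
  rintro E ⟨hE, u, u', hu, hunb⟩
  have hsq : 0 < √E := Real.sqrt_pos.2 hE
  refine ⟨2 * √E, ?_, by simp only; rw [mul_div_cancel_left₀ _ two_ne_zero, Real.sq_sqrt hE.le]⟩
  by_contra hbad
  obtain ⟨hne, hD⟩ := ne_zero_and_summable_of_tsum_div_dist_ne_top hw hbad
  refine hunb ?_
  rw [← Real.sq_sqrt hE.le] at hu
  refine hu.exists_bound (s := {x | ¬ ContinuousAt γ x}) (fun x hx hxs => ?_)
    fun w w' h1 h2 h3 => ?_
  · rw [Set.mem_ofPred_eq, not_not] at hxs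
    have hc' : ContinuousAt (fun x => ((γ x : ℂ) * expSeries c φ x).re) x :=
      Complex.continuous_re.continuousAt.comp
        ((Complex.continuous_ofReal.continuousAt.comp hxs).mul
          (continuous_expSeries hcs φ).continuousAt)
    refine hc'.congr ?_
    filter_upwards [Ioi_mem_nhds hx] with y hy
    rw [← hV y hy, Complex.ofReal_re]
  · exact bounded_of_summable_coef hsq hcs (fun t ht => hne ⟨t, ht⟩)
      (LabelTree.summable_coef (by positivity) hb0 hb1 hbq hbs
        (summable_subtype_iff_indicator.1 hD)) hγ hV hR hR0 hγR hM h1 h2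
      hγ.countable_not_continuousAt h3

theorem dimH_unbounded_le_of_lintegral {κ : Type*} [Countable κ] {c : κ → ℂ} {φ : κ → ℝ}
    (hc0 : ∀ i, c i ≠ 0) (hc1 : ∀ i, ‖c i‖ ≤ 1) {q : ℕ} (hq : q ≠ 0) {α : ℝ} (hα : 0 < α)
    (hα1 : α ≤ 1) (hqα : q * α < 1) (hs : Summable fun i => ‖c i‖ ^ α) {γ T V : ℝ → ℝ} {K : ℝ}
    (hγ : IsVariationBound γ T K) (hV : ∀ x > 0, (V x : ℂ) = γ x * expSeries c φ x)
    (hVp : ∫⁻ x in Ioi (0:ℝ), (‖V x‖₊ : ℝ≥0∞) ^ (q + 1) < ⊤) :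
    dimH {E : ℝ | 0 < E ∧ ∃ u u' : ℝ → ℂ, IsWeakSolution V E u u' ∧
        ¬ ∃ C : ℝ, ∀ x ∈ Set.Ioi (0:ℝ), ‖u x‖ ≤ C} ≤ ENNReal.ofReal (q * α) := by
  have hcs : Summable fun i => ‖c i‖ := Summable.of_nonneg_of_le (fun i => norm_nonneg _)
    (fun i => by simpa using
      Real.rpow_le_rpow_of_exponent_ge (norm_pos_iff.2 (hc0 i)) (hc1 i) hα1) hs
  have hVabs : ∀ x > 0, |V x| = |γ x| * ‖expSeries c φ x‖ := fun x hx => by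
    rw [← Real.norm_eq_abs, ← Complex.norm_real, hV x hx, norm_mul, Complex.norm_real,
      Real.norm_eq_abs]
  have hγb : ∀ x, |γ x| ≤ |γ 1| + 2 * K := fun x => by
    have h1 := abs_le.1 (hγ.bound x)
    have h2 := abs_le.1 (hγ.bound 1)
    have h3 : |γ x - γ 1| ≤ 2 * K := by
      rcases le_total 1 x with hx | hx
      · linarith [hγ.abs_sub_le 1 x hx]
      · rw [abs_sub_comm]
        linarith [hγ.abs_sub_le x 1 hx]
    linarith [abs_sub_abs_le_abs_sub (γ x) (γ 1)]
  have hM : ∀ x > 0, |V x| ≤ (|γ 1| + 2 * K) * ∑' i, ‖c i‖ := fun x hx => by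
    rw [hVabs x hx]
    exact mul_le_mul (hγb x) (norm_expSeries_le hcs φ x) (norm_nonneg _)
      ((abs_nonneg _).trans (hγb x))
  by_cases hzero : ∀ x, expSeries c φ x = 0
  · refine dimH_unbounded_le (φ := φ) (R := 0) hc0 hc1 hq hα hqα hs IsVariationBound.zero
      (fun x hx => ?_) (integrable_zero _ _ _) tendsto_const_nhds (fun x _ => by simp) hM
    rw [hV x hx, hzero x, mul_zero, mul_zero]
  · obtain ⟨x₀, hx₀⟩ := not_forall.1 hzero
    obtain ⟨N, hN, δ, hδ, hlow⟩ := exists_le_integral_norm_expSeries_pow hcs φ hx₀ (q + 1)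
    have hω : Continuous fun x => ‖expSeries c φ x‖ := (continuous_expSeries hcs φ).norm
    have hinteg : IntegrableOn (fun x => |γ x * ‖expSeries c φ x‖| ^ (q + 1)) (Ioi 1) := by
      refine ⟨((hγ.measurable.mul hω.measurable).abs.pow_const _).aestronglyMeasurable, ?_⟩
      refine lt_of_le_of_lt ?_ hVp
      refine (setLIntegral_mono' measurableSet_Ioi fun x hx => ?_).trans
        (lintegral_mono_set (Ioi_subset_Ioi zero_le_one))
      rw [enorm_pow, ← Real.norm_eq_abs, enorm_norm, ← enorm_eq_nnnorm]
      gcongr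
      rw [enorm_le_iff_norm_le, norm_mul, norm_norm, Real.norm_eq_abs, Real.norm_eq_abs,
        hVabs x (one_pos.trans hx)]
    obtain ⟨R, hR, hR0, hγR⟩ := hγ.pow_le_integrable hω
      (fun x => (abs_norm _).trans_le (norm_expSeries_le hcs φ x)) (Nat.succ_ne_zero q) hinteg hN hδ
      (fun x => by simpa only [abs_norm] using hlow x)
    exact dimH_unbounded_le hc0 hc1 hq hα hqα hs hγ hV hR hR0 hγR hM

end

theorem stmt1 (p : ℕ) (hp : 2 ≤ p) (α : ℝ) (hα0 : 0 < α) (hα1 : α < 1 / ((p : ℝ) - 1))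
    (γ : ℝ → ℝ) (hγ : BoundedVariationOn γ (Set.Ioi 0))
    (c : ℕ → ℂ) (hc : Summable fun k => ‖c k‖ ^ α) (φ : ℕ → ℝ)
    (V : ℝ → ℝ)
    (hV : ∀ x ∈ Set.Ioi (0:ℝ),
      (V x : ℂ) = (γ x : ℂ) * ∑' k, c k * Complex.exp (-Complex.I * (φ k) * x))
    (hVp : ∫⁻ x in Set.Ioi (0:ℝ), (‖V x‖₊ : ℝ≥0∞) ^ p < ⊤) :
    dimH {E : ℝ | 0 < E ∧ ∃ u u' : ℝ → ℂ, IsWeakSolution V E u u' ∧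
        ¬ ∃ C : ℝ, ∀ x ∈ Set.Ioi (0:ℝ), ‖u x‖ ≤ C} ≤
      ENNReal.ofReal (((p : ℝ) - 1) * α) := by
  obtain ⟨q, rfl⟩ : ∃ q, p = q + 1 := ⟨p - 1, by omega⟩
  have hq : q ≠ 0 := by omega
  have hq1 : (1:ℝ) ≤ q := by exact_mod_cast Nat.one_le_iff_ne_zero.2 hq
  rw [Nat.cast_add_one, add_sub_cancel_right] at hα1 ⊢
  have hqα : q * α < 1 := by
    rw [lt_div_iff₀ (by linarith)] at hα1
    linarith
  have hα1' : α ≤ 1 := by nlinarith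
  obtain ⟨T, K, hT⟩ := hγ.exists_isVariationBound
  set B : ℝ := (∑' k, ‖c k‖ ^ α) ^ (1 / α) + 1 with hB
  have hS0 : 0 ≤ ∑' k, ‖c k‖ ^ α := tsum_nonneg fun k => Real.rpow_nonneg (norm_nonneg _) _
  have hB0 : 0 < B := add_pos_of_nonneg_of_pos (Real.rpow_nonneg hS0 _) one_pos
  have hcB : ∀ k, ‖c k‖ ≤ B := fun k => by
    have h1 := Real.rpow_le_rpow (Real.rpow_nonneg (norm_nonneg _) _)
      (hc.le_tsum k fun j _ => Real.rpow_nonneg (norm_nonneg (c j)) α)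
      (one_div_nonneg.2 hα0.le)
    rw [← Real.rpow_mul (norm_nonneg _), mul_one_div_cancel hα0.ne', Real.rpow_one] at h1
    linarith
  have hnorm : ∀ k, ‖c k / B‖ = ‖c k‖ / B := fun k => by
    rw [norm_div, Complex.norm_real, Real.norm_of_nonneg hB0.le]
  refine dimH_unbounded_le_of_lintegral (κ := Function.support c) (c := fun k => c k / B)
    (φ := fun k => φ k) (fun k => div_ne_zero k.2 (by exact_mod_cast hB0.ne')) (fun k => ?_) hq
    hα0 hα1' hqα ?_ (hT.const_mul hB0.le) (fun x hx => ?_) hVp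
  · rw [hnorm, div_le_one hB0]
    exact hcB k
  · simp only [hnorm, Real.div_rpow (norm_nonneg _) hB0.le]
    exact (hc.subtype _).div_const _
  · rw [hV x hx, Set.indicator_of_mem (s := Set.Ioi (0:ℝ)) hx, Complex.ofReal_mul, mul_right_comm, mul_comm,
      expSeries, ← tsum_mul_left]
    congr 1
    rw [← tsum_subtype_eq_of_support_subset (s := Function.support c)]
    · refine tsum_congr fun k => ?_
      have : (B:ℂ) ≠ 0 := by exact_mod_cast hB0.ne'
      field_simp
    · intro k hk hk0
      simp [hk0] at hk
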